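/- Let η be a Borel probability measure on [0,1] that is absolutely continuous with respect to Lebesgue measure, and let f : ℍ → ℝ be continuous, SL(2,ℤ)-invariant, and compactly supported in the quotient. Then lim_{ε→0⁺} ∫₀¹ f(x + iε) dη(x) = (3/π) · ∫_F f(x+iy) · y⁻² dx dy. -/

import Mathlib

open MeasureTheory Complex

/-- The standard fundamental domain for `SL(2,ℤ)` acting on the upper half-plane, viewed as a
subset of `ℝ × ℝ` (coordinates `(x, y)` with `z = x + iy`). -/
def fundDom : Set (ℝ × ℝ) :=
  {p | |p.1| < 1 / 2 ∧ 1 < p.1 ^ 2 + p.2 ^ 2 ∧ 0 < p.2}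

open UpperHalfPlane in
/-- point of the upper half plane -/
noncomputable def hpt (x y : ℝ) : UpperHalfPlane := ofComplex (⟨x, y⟩ : ℂ)

lemma coe_hpt {x y : ℝ} (hy : 0 < y) : (hpt x y : ℂ) = ⟨x, y⟩ := by
  unfold hpt; rw [UpperHalfPlane.ofComplex_apply_of_im_pos (by simpa using hy)]

lemma hpt_re {x y : ℝ} (hy : 0 < y) : (hpt x y).re = x := by
  rw [← UpperHalfPlane.coe_re, coe_hpt hy]

lemma hpt_im {x y : ℝ} (hy : 0 < y) : (hpt x y).im = y := by
  rw [← UpperHalfPlane.coe_im, coe_hpt hy]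

lemma hpt_eta (z : UpperHalfPlane) : hpt z.re z.im = z := by
  apply UpperHalfPlane.ext
  rw [coe_hpt z.im_pos]; rfl

lemma continuous_hpt : ContinuousOn (fun p : ℝ × ℝ => hpt p.1 p.2) {p | 0 < p.2} := by
  rw [UpperHalfPlane.isEmbedding_coe.continuousOn_iff]
  have : ContinuousOn (fun p : ℝ × ℝ => (⟨p.1, p.2⟩ : ℂ)) {p | 0 < p.2} :=
    (Complex.equivRealProdCLM.symm.continuous).continuousOn
  exact this.congr fun p hp => by simp [coe_hpt (show 0 < p.2 from hp)]

structure Nice (g : UpperHalfPlane → ℝ) : Prop where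
  cont : Continuous g
  inv : ∀ (γ : Matrix.SpecialLinearGroup (Fin 2) ℤ) (z : UpperHalfPlane), g (γ • z) = g z
  supp : ∃ Y : ℝ, 0 < Y ∧ ∀ z : UpperHalfPlane, Y < z.im → g z = 0

lemma Nice.bdd {g} (h : Nice g) : ∃ M : ℝ, 0 < M ∧ ∀ z, |g z| ≤ M := by
  obtain ⟨Y, hY, hs⟩ := h.supp
  obtain ⟨M, hM⟩ := (ModularGroup.isCompact_truncatedFundamentalDomain Y).exists_bound_of_continuousOn
    h.cont.continuousOn
  refine ⟨max M 1, by positivity, fun z => ?_⟩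
  obtain ⟨γ, hγ⟩ := ModularGroup.exists_smul_mem_fd z
  rw [← h.inv γ z]
  by_cases hy : Y < (γ • z).im
  · rw [hs _ hy]; simp
  · exact (hM _ ⟨hγ, not_lt.1 hy⟩).trans (le_max_left _ _)

lemma sl2z_isom (γ : Matrix.SpecialLinearGroup (Fin 2) ℤ) (z w : UpperHalfPlane) :
    dist (γ • z) (γ • w) = dist z w := by
  exact dist_smul ((γ : Matrix.SpecialLinearGroup (Fin 2) ℝ)) z w

lemma Nice.unif {g} (h : Nice g) : ∀ e > 0, ∃ δ > 0, ∀ z w, dist z w < δ → |g z - g w| < e := by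
  obtain ⟨Y, hY, hs⟩ := h.supp
  intro e he
  have hK := ModularGroup.isCompact_truncatedFundamentalDomain Y
  have := hK.uniformContinuousAt_of_continuousAt g (fun a _ => h.cont.continuousAt)
    (Metric.dist_mem_uniformity he)
  obtain ⟨δ, hδ, hδ'⟩ := Metric.mem_uniformity_dist.1 this
  have key : ∀ z w, dist z w < δ → g z ≠ 0 → |g z - g w| < e := by
    intro z w hd hz
    obtain ⟨γ, hγ⟩ := ModularGroup.exists_smul_mem_fd z
    rw [← h.inv γ z] at hz
    have hy : ¬ Y < (γ • z).im := fun hy => hz (hs _ hy)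
    have := hδ' (a := γ • z) (b := γ • w) (by rwa [sl2z_isom]) ⟨hγ, not_lt.1 hy⟩
    simp only [Set.mem_setOf_eq, Real.dist_eq, h.inv] at this
    exact this
  refine ⟨δ, hδ, fun z w hd => ?_⟩
  by_cases hz : g z = 0
  · by_cases hw : g w = 0
    · simp [hz, hw, he]
    · rw [abs_sub_comm]; exact key w z (by rwa [dist_comm]) hw
  · exact key z w hd hz

lemma Nice.period {g} (h : Nice g) (x : ℝ) {y : ℝ} (hy : 0 < y) (n : ℤ) :
    g (hpt (x + n) y) = g (hpt x y) := by
  rw [← h.inv (ModularGroup.T ^ n) (hpt x y)]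
  congr 1
  apply UpperHalfPlane.ext
  rw [ModularGroup.coe_T_zpow_smul_eq, coe_hpt hy, coe_hpt hy]
  apply Complex.ext <;> simp

instance sl2z_countable : Countable (Matrix.SpecialLinearGroup (Fin 2) ℤ) := by
  have : Countable (Matrix (Fin 2) (Fin 2) ℤ) := inferInstanceAs (Countable (Fin 2 → Fin 2 → ℤ))
  exact Subtype.countable

lemma mp_sl2z (γ : Matrix.SpecialLinearGroup (Fin 2) ℤ) :
    MeasurePreserving (fun z : UpperHalfPlane => γ • z) volume volume := by
  exact measurePreserving_smul ((γ : Matrix.SpecialLinearGroup (Fin 2) ℝ) : GL (Fin 2) ℝ)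
    (volume : Measure UpperHalfPlane)

lemma vol_zero_of_coe {s : Set UpperHalfPlane} (h : volume ((UpperHalfPlane.coe) '' s) = 0) :
    volume s = 0 := by
  rw [UpperHalfPlane.volume_eq_lintegral]
  exact setLIntegral_measure_zero _ _ h

lemma vol_re_eq (a : ℝ) : volume {z : ℂ | z.re = a} = 0 := by
  have := Complex.volume_preserving_equiv_real_prod.measure_preimage_equiv
    (({a} : Set ℝ) ×ˢ (Set.univ : Set ℝ))
  have h2 : (volume : Measure (ℝ × ℝ)) (({a} : Set ℝ) ×ˢ (Set.univ : Set ℝ)) = 0 := by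
    rw [Measure.volume_eq_prod, Measure.prod_prod]; simp
  rw [h2] at this
  rw [← this]
  congr 1
  ext z
  simp

lemma vol_bdry : volume (ModularGroup.fd \ ModularGroup.fdo) = 0 := by
  apply vol_zero_of_coe
  have : (UpperHalfPlane.coe '' (ModularGroup.fd \ ModularGroup.fdo)) ⊆
      {z : ℂ | z.re = 1/2} ∪ {z : ℂ | z.re = -1/2} ∪ Metric.sphere 0 1 := by
    rintro _ ⟨z, ⟨⟨h1, h2⟩, h3⟩, rfl⟩
    by_contra hc
    simp only [Set.mem_union, Set.mem_ofPred_eq, not_or, mem_sphere_zero_iff_norm] at hc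
    obtain ⟨⟨c1, c2⟩, c3⟩ := hc
    apply h3
    constructor
    · refine lt_of_le_of_ne h1 (fun h => c3 ?_)
      rw [Complex.normSq_eq_norm_sq] at h
      have := norm_nonneg (z : ℂ)
      nlinarith
    · refine lt_of_le_of_ne h2 (fun h => ?_)
      rcases (abs_eq (by norm_num)).1 h with h | h
      · exact c1 (by simpa using h)
      · apply c2
        rw [UpperHalfPlane.coe_re, h]; norm_num
  refine measure_mono_null this ?_
  rw [measure_union_null_iff, measure_union_null_iff]
  exact ⟨⟨vol_re_eq _, vol_re_eq _⟩, Measure.addHaar_sphere _ _ _⟩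

lemma ae_count : ∀ᵐ z : UpperHalfPlane, 
    ∑' γ : Matrix.SpecialLinearGroup (Fin 2) ℤ,
      ModularGroup.fdo.indicator (fun _ => (1 : ENNReal)) (γ⁻¹ • z) = 2 := by
  have h0 : ∀ᵐ z : UpperHalfPlane, ∀ γ : Matrix.SpecialLinearGroup (Fin 2) ℤ,
      γ • z ∉ ModularGroup.fd \ ModularGroup.fdo := by
    rw [ae_all_iff]
    intro γ
    have h1 : volume ((fun z : UpperHalfPlane => γ • z) ⁻¹' (ModularGroup.fd \ ModularGroup.fdo)) = 0 :=
      (mp_sl2z γ).quasiMeasurePreserving.preimage_null vol_bdry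
    have h2 := measure_eq_zero_iff_ae_notMem.1 h1
    filter_upwards [h2] with z hz
    exact hz
  filter_upwards [h0] with z hz
  obtain ⟨γ, hγ⟩ := ModularGroup.exists_smul_mem_fd z
  have hγo : γ • z ∈ ModularGroup.fdo := by
    by_contra h; exact hz γ ⟨hγ, h⟩
  have hne : γ⁻¹ ≠ -γ⁻¹ := by
    intro h
    have h1 := congrArg (fun g => g * γ) h
    simp only [inv_mul_cancel, neg_mul] at h1
    have h2 := congrArg (fun g : Matrix.SpecialLinearGroup (Fin 2) ℤ => g 0 0) h1
    simp at h2
  have hiff : ∀ β : Matrix.SpecialLinearGroup (Fin 2) ℤ,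
      β⁻¹ • z ∈ ModularGroup.fdo ↔ β = γ⁻¹ ∨ β = -γ⁻¹ := by
    intro β
    constructor
    · intro hβ
      have h1 : (β⁻¹ * γ⁻¹) • (γ • z) ∈ ModularGroup.fdo := by
        rw [smul_smul]; simpa using hβ
      rcases ModularGroup.eq_one_or_neg_one_of_mem_fdo_mem_fdo hγo h1 with h | h
      · left
        rw [mul_eq_one_iff_eq_inv, inv_inv] at h
        rw [← h, inv_inv]
      · right
        have : β * (β⁻¹ * γ⁻¹) = β * (-1) := by rw [h]
        rw [mul_inv_cancel_left, mul_neg, mul_one] at this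
        rw [this, neg_neg]
    · rintro (rfl | rfl)
      · simpa using hγo
      · have : (-γ⁻¹)⁻¹ = -γ := by
          rw [inv_eq_iff_mul_eq_one]; simp
        rw [this]
        rwa [ModularGroup.SL_neg_smul]
  rw [tsum_eq_sum (s := {γ⁻¹, -γ⁻¹})]
  · rw [Finset.sum_pair hne, Set.indicator_of_mem ((hiff _).2 (Or.inl rfl)),
      Set.indicator_of_mem ((hiff _).2 (Or.inr rfl))]
    norm_num
  · intro β hβ
    rw [Set.indicator_of_notMem]
    rw [hiff]; simpa using hβ

lemma unfold_lint (φ : UpperHalfPlane → ENNReal) (hφ : Measurable φ) :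
    2 * ∫⁻ z, φ z = ∫⁻ w in ModularGroup.fdo,
      ∑' γ : Matrix.SpecialLinearGroup (Fin 2) ℤ, φ (γ • w) := by
  have hm : ∀ γ : Matrix.SpecialLinearGroup (Fin 2) ℤ, Measurable fun z : UpperHalfPlane => γ • z :=
    fun γ => (mp_sl2z γ).measurable
  have hmo : MeasurableSet ModularGroup.fdo := ModularGroup.isOpen_fdo.measurableSet
  have hemb : ∀ γ : Matrix.SpecialLinearGroup (Fin 2) ℤ,
      ∫⁻ w in ModularGroup.fdo, φ (γ • w)
       = ∫⁻ z, φ z * ModularGroup.fdo.indicator (fun _ => (1 : ENNReal)) (γ⁻¹ • z) := by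
    intro γ
    rw [← (mp_sl2z γ).lintegral_comp (f := fun z => φ z *
      ModularGroup.fdo.indicator (fun _ => (1 : ENNReal)) (γ⁻¹ • z))]
    · rw [← lintegral_indicator hmo]
      congr 1; ext w
      by_cases hw : w ∈ ModularGroup.fdo <;> simp [hw]
    · exact hφ.mul ((measurable_const.indicator hmo).comp (hm _))
  have e0 : ∀ γ : Matrix.SpecialLinearGroup (Fin 2) ℤ, AEMeasurable (fun w => φ (γ • w))
    (volume.restrict ModularGroup.fdo) := fun γ => (hφ.comp (hm γ)).aemeasurable
  rw [lintegral_tsum e0]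
  simp_rw [hemb]
  have e1 : ∀ γ : Matrix.SpecialLinearGroup (Fin 2) ℤ, AEMeasurable (fun z => φ z *
    ModularGroup.fdo.indicator (fun _ => (1 : ENNReal)) (γ⁻¹ • z))
    volume := fun γ => (hφ.mul ((measurable_const.indicator hmo).comp (hm _))).aemeasurable
  rw [← lintegral_tsum e1]
  simp_rw [ENNReal.tsum_mul_left]
  rw [← lintegral_const_mul _ hφ]
  apply lintegral_congr_ae
  filter_upwards [ae_count] with z hz
  rw [hz, mul_comm]

lemma lint_hpt (h : UpperHalfPlane → ENNReal) (hh : Measurable h) :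
    ∫⁻ z, h z = ∫⁻ p in {p : ℝ × ℝ | 0 < p.2}, h (hpt p.1 p.2) * ENNReal.ofReal (1 / p.2 ^ 2) := by
  have hmp : MeasurePreserving UpperHalfPlane.coe (volume.comap UpperHalfPlane.coe)
      (volume.restrict (.range UpperHalfPlane.coe)) :=
    ⟨UpperHalfPlane.measurable_coe, by rw [UpperHalfPlane.measurableEmbedding_coe.map_comap]⟩
  rw [UpperHalfPlane.volume_def, lintegral_withDensity_eq_lintegral_mul₀']
  rotate_left
  · apply Measurable.aemeasurable
    refine Measurable.coe_nnreal_ennreal ?_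
    refine Measurable.pow_const (Measurable.div measurable_const ?_) _
    exact UpperHalfPlane.continuous_im.measurable.subtype_mk
  · exact hh.aemeasurable
  have e1 : ∀ z : UpperHalfPlane, ((fun z : UpperHalfPlane ↦
      (((1 / NNReal.mk z.im z.im_pos.le : NNReal) ^ 2 : NNReal) : ENNReal)) * h) z
      = (fun w : ℂ => h (UpperHalfPlane.ofComplex w) * ENNReal.ofReal (1 / w.im ^ 2)) z := by
    intro z
    simp only [Pi.mul_apply, UpperHalfPlane.ofComplex_apply, UpperHalfPlane.coe_im]
    rw [mul_comm]
    congr 1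
    rw [ENNReal.ofReal, ENNReal.coe_inj]
    apply NNReal.coe_injective
    rw [Real.coe_toNNReal _ (by positivity)]
    simp
  rw [lintegral_congr e1, hmp.lintegral_comp_emb UpperHalfPlane.measurableEmbedding_coe
    (fun w : ℂ => h (UpperHalfPlane.ofComplex w) * ENNReal.ofReal (1 / w.im ^ 2))]
  rw [← Complex.volume_preserving_equiv_real_prod.symm.setLIntegral_comp_preimage_emb
    (MeasurableEquiv.measurableEmbedding _)]
  congr 1
  congr 1
  ext p
  simp [UpperHalfPlane.range_coe, UpperHalfPlane.upperHalfPlaneSet]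

def LB (w : UpperHalfPlane) (R : ℝ) : Set (Fin 2 → ℤ) :=
  {v | v ≠ 0 ∧ ‖(v 0 : ℂ) * w + v 1‖ ≤ R}
def PB (w : UpperHalfPlane) (R : ℝ) : Set (Fin 2 → ℤ) :=
  {v | IsCoprime (v 0) (v 1) ∧ ‖(v 0 : ℂ) * w + v 1‖ ≤ R}

def DD (w : UpperHalfPlane) (D : ℝ) : Prop := 1 / w.im ≤ D ∧ 1 + |w.re| / w.im ≤ D

lemma exists_DD (w : UpperHalfPlane) : ∃ D, DD w D := ⟨_, le_max_left _ _, le_max_right _ _⟩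

lemma DD.pos {w D} (h : DD w D) : 0 < D := by
  have := w.im_pos
  exact lt_of_lt_of_le (by positivity) h.1

lemma DD.bound {w D} (h : DD w D) (v : Fin 2 → ℤ) (i : Fin 2) :
    |(v i : ℝ)| ≤ D * ‖(v 0 : ℂ) * w + v 1‖ := by
  have hy := w.im_pos
  have him : |(v 0 : ℝ) * w.im| ≤ ‖(v 0 : ℂ) * w + v 1‖ := by
    have := Complex.abs_im_le_norm ((v 0 : ℂ) * w + v 1)
    simpa using this
  have hre : |(v 0 : ℝ) * w.re + v 1| ≤ ‖(v 0 : ℂ) * w + v 1‖ := by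
    have := Complex.abs_re_le_norm ((v 0 : ℂ) * w + v 1)
    simpa using this
  set n := ‖(v 0 : ℂ) * w + v 1‖
  have hn : 0 ≤ n := norm_nonneg _
  rw [abs_mul, abs_of_pos hy] at him
  have h0 : |(v 0 : ℝ)| ≤ (1 / w.im) * n := by
    rw [one_div, inv_mul_eq_div, le_div_iff₀ hy]; exact him
  fin_cases i
  · exact h0.trans (mul_le_mul_of_nonneg_right h.1 hn)
  · have : |(v 1 : ℝ)| ≤ (1 + |w.re| / w.im) * n := by
      calc |(v 1 : ℝ)| = |((v 0 : ℝ) * w.re + v 1) - v 0 * w.re| := by ring_nf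
        _ ≤ |(v 0 : ℝ) * w.re + v 1| + |(v 0 : ℝ) * w.re| := abs_sub _ _
        _ ≤ n + (1 / w.im) * n * |w.re| := by
            rw [abs_mul (v 0 : ℝ)]; gcongr
        _ = _ := by ring
    exact this.trans (mul_le_mul_of_nonneg_right h.2 hn)

lemma LB_subset {w D} (h : DD w D) (R : ℝ) :
    LB w R ⊆ ((Fintype.piFinset fun _ : Fin 2 => Finset.Icc (-⌊D * R⌋) ⌊D * R⌋ : Finset (Fin 2 → ℤ)) : Set _) := by
  rintro v ⟨_, hv⟩
  simp only [Finset.mem_coe, Fintype.mem_piFinset, Finset.mem_Icc]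
  intro i
  have := (h.bound v i).trans (mul_le_mul_of_nonneg_left hv h.pos.le)
  have h2 : |v i| ≤ ⌊D * R⌋ := by
    rw [Int.le_floor]; push_cast; exact this
  exact abs_le.1 h2

lemma LB_finite (w R) : (LB w R).Finite := by
  obtain ⟨D, h⟩ := exists_DD w
  exact (Finset.finite_toSet _).subset (LB_subset h R)

lemma PB_subset (w R) : PB w R ⊆ LB w R := by
  rintro v ⟨h1, h2⟩
  refine ⟨?_, h2⟩
  rintro rfl
  exact not_isCoprime_zero_zero h1

lemma PB_finite (w R) : (PB w R).Finite := (LB_finite w R).subset (PB_subset w R)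

lemma LB_card_le {w D} (h : DD w D) {R : ℝ} :
    ((LB w R).ncard : ℝ) ≤ 9 * D ^ 2 * R ^ 2 := by
  by_cases h1 : D * R < 1
  · have : LB w R = ∅ := by
      rw [Set.eq_empty_iff_forall_notMem]
      rintro v ⟨hv0, hv⟩
      apply hv0
      ext i
      have := (h.bound v i).trans (mul_le_mul_of_nonneg_left hv h.pos.le)
      have h2 : |(v i : ℝ)| < 1 := by linarith
      have h3 : |v i| < 1 := by exact_mod_cast h2
      simpa [Int.abs_lt_one_iff] using h3
    rw [this]; simp; positivity
  · push Not at h1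
    have hf : (1 : ℤ) ≤ ⌊D * R⌋ := by rw [Int.le_floor]; simpa using h1
    have h2 := Set.ncard_le_ncard (LB_subset h R) (Finset.finite_toSet _)
    rw [Set.ncard_coe_finset, Fintype.card_piFinset] at h2
    simp only [Int.card_Icc, Finset.prod_const, Finset.card_univ, Fintype.card_fin] at h2
    have h3 : ((LB w R).ncard : ℝ) ≤ (((⌊D * R⌋ + 1 - -⌊D * R⌋).toNat : ℕ) : ℝ) ^ 2 := by
      exact_mod_cast h2
    have h4 : (((⌊D * R⌋ + 1 - -⌊D * R⌋).toNat : ℕ) : ℝ) = 2 * (⌊D * R⌋ : ℝ) + 1 := by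
      have : (((⌊D * R⌋ + 1 - -⌊D * R⌋).toNat : ℕ) : ℤ) = 2 * ⌊D * R⌋ + 1 := by omega
      exact_mod_cast this
    rw [h4] at h3
    have h5 : (⌊D * R⌋ : ℝ) ≤ D * R := Int.floor_le _
    have h6 : (1 : ℝ) ≤ ⌊D * R⌋ := by exact_mod_cast hf
    have : (2 * (⌊D * R⌋ : ℝ) + 1) ^ 2 ≤ (3 * (D * R)) ^ 2 := by
      gcongr; linarith
    nlinarith

open ArithmeticFunction in
lemma PB_card (w : UpperHalfPlane) {R : ℝ} :
    ((PB w R).ncard : ℝ) = ∑' n : ℕ, (moebius n : ℝ) * ((LB w (R / n)).ncard : ℝ) := by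
  classical
  set V := (LB_finite w R).toFinset with hV
  have hgcd : ∀ v ∈ V, Int.gcd (v 0) (v 1) ≠ 0 := by
    intro v hv hc
    rw [Int.gcd_eq_zero_iff] at hc
    simp only [hV, Set.Finite.mem_toFinset] at hv
    exact hv.1 (by ext i; fin_cases i; exacts [hc.1, hc.2])
  -- a bound for all gcds
  set N := V.sup (fun v => Int.gcd (v 0) (v 1)) + 1 with hN
  have hlt : ∀ v ∈ V, Int.gcd (v 0) (v 1) < N := fun v hv =>
    Nat.lt_succ_of_le (Finset.le_sup (f := fun v : Fin 2 → ℤ => Int.gcd (v 0) (v 1)) hv)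
  have hLB : ∀ n : ℕ, n ≠ 0 → (LB w (R / n)).ncard =
      (V.filter (fun v => n ∣ Int.gcd (v 0) (v 1))).card := by
    intro n hn
    have hn' : (0 : ℝ) < n := by positivity
    rw [← Set.ncard_coe_finset]
    refine Set.ncard_congr (fun v _ => (n : ℤ) • v) ?_ ?_ ?_
    · rintro v ⟨h1, h2⟩
      simp only [Finset.coe_filter, hV, Set.Finite.mem_toFinset, Set.mem_ofPred_eq]
      refine ⟨⟨?_, ?_⟩, ?_⟩
      · exact smul_ne_zero (by exact_mod_cast hn) h1
      · rw [le_div_iff₀ hn'] at h2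
        calc _ = ‖(n : ℂ) * ((v 0 : ℂ) * w + v 1)‖ := by
              congr 1; simp; ring
          _ = n * ‖((v 0 : ℂ) * w + v 1)‖ := by rw [norm_mul]; simp
          _ ≤ R := by linarith
      · apply Int.dvd_gcd_iff.2
        constructor <;> simp
    · intro v v' _ _ h
      exact smul_right_injective _ (by exact_mod_cast hn) h
    · intro v hv
      simp only [Finset.coe_filter, hV, Set.Finite.mem_toFinset, Set.mem_ofPred_eq] at hv
      obtain ⟨⟨h1, h2⟩, h3⟩ := hv
      have d0 : (n : ℤ) ∣ v 0 := (Int.natCast_dvd_natCast.2 h3).trans (Int.gcd_dvd_left _ _)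
      have d1 : (n : ℤ) ∣ v 1 := (Int.natCast_dvd_natCast.2 h3).trans (Int.gcd_dvd_right _ _)
      obtain ⟨a, ha⟩ := d0
      obtain ⟨b, hb⟩ := d1
      have hv : (n : ℤ) • ![a, b] = v := by
        ext i; fin_cases i <;> simp [ha, hb]
      refine ⟨![a, b], ⟨?_, ?_⟩, hv⟩
      · intro hc; rw [hc] at hv; exact h1 (by rw [← hv]; simp)
      · rw [le_div_iff₀ hn']
        calc _ = ‖(n : ℂ) * ((a : ℂ) * w + b)‖ := by
              rw [norm_mul]; simp; ring
          _ = ‖((v 0 : ℂ) * w + v 1)‖ := by rw [ha, hb]; congr 1; push_cast; ring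
          _ ≤ R := h2
  have hPB : (PB w R).ncard = (V.filter (fun v => Int.gcd (v 0) (v 1) = 1)).card := by
    rw [← Set.ncard_coe_finset]
    congr 1
    ext v
    simp only [Finset.coe_filter, hV, Set.Finite.mem_toFinset, Set.mem_ofPred_eq]
    rw [← Int.isCoprime_iff_gcd_eq_one]
    constructor
    · intro h; exact ⟨PB_subset _ _ h, h.1⟩
    · rintro ⟨h, h'⟩; exact ⟨h', h.2⟩
  rw [tsum_eq_sum (s := Finset.range N)]
  · rw [hPB, Finset.card_filter]
    push_cast
    have : ∀ v ∈ V, (if Int.gcd (v 0) (v 1) = 1 then (1 : ℝ) else 0) =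
        ∑ n ∈ Finset.range N, (moebius n : ℝ) * (if n ∣ Int.gcd (v 0) (v 1) then 1 else 0) := by
      intro v hv
      have h1 := congrArg (fun f => f (Int.gcd (v 0) (v 1))) moebius_mul_coe_zeta
      simp only [coe_mul_zeta_apply, one_apply] at h1
      have h2 : (Finset.range N).filter (fun n => n ∣ Int.gcd (v 0) (v 1)) =
          (Int.gcd (v 0) (v 1)).divisors := by
        ext n
        simp only [Finset.mem_filter, Finset.mem_range, Nat.mem_divisors]
        constructor
        · rintro ⟨_, h⟩; exact ⟨h, hgcd v hv⟩
        · rintro ⟨h, _⟩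
          exact ⟨(Nat.le_of_dvd (Nat.pos_of_ne_zero (hgcd v hv)) h).trans_lt (hlt v hv), h⟩
      simp only [mul_ite, mul_one, mul_zero]
      rw [← Finset.sum_filter, h2]
      exact_mod_cast h1.symm
    rw [Finset.sum_congr rfl this, Finset.sum_comm]
    apply Finset.sum_congr rfl
    intro n _
    by_cases hn : n = 0
    · subst hn; simp
    · rw [hLB n hn, ← Finset.mul_sum, Finset.card_filter]
      push_cast; rfl
  · intro n hn
    simp only [Finset.mem_range, not_lt] at hn
    have hn0 : n ≠ 0 := by omega
    rw [hLB n hn0, Finset.card_eq_zero.2, Nat.cast_zero, mul_zero]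
    rw [Finset.filter_eq_empty_iff]
    intro v hv hd
    have := Nat.le_of_dvd (Nat.pos_of_ne_zero (hgcd v hv)) hd
    have := hlt v hv
    omega

open ArithmeticFunction in
lemma moebius_sum : ∑' n : ℕ, (moebius n : ℝ) / (n : ℝ) ^ 2 = 6 / Real.pi ^ 2 := by
  have h := LSeries_one_mul_Lseries_moebius (s := 2) (by norm_num)
  rw [LSeries_one_eq_riemannZeta (by norm_num), riemannZeta_two] at h
  have h2 : LSeries (fun n => ((moebius n : ℤ) : ℂ)) 2 =
      ((∑' n : ℕ, (moebius n : ℝ) / (n : ℝ) ^ 2 : ℝ) : ℂ) := by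
    rw [LSeries, Complex.ofReal_tsum]
    apply tsum_congr
    intro n
    rw [LSeries.term]
    split_ifs with hn
    · simp [hn]
    · push_cast
      congr 1
      norm_cast
  rw [h2] at h
  have h3 : (Real.pi ^ 2 / 6) * (∑' n : ℕ, (moebius n : ℝ) / (n : ℝ) ^ 2) = 1 := by
    exact_mod_cast h
  have := Real.pi_pos
  field_simp at h3 ⊢
  linarith

open Filter Topology

def sEll (w : UpperHalfPlane) : Set (Fin 2 → ℝ) := {p | ‖(p 0 : ℂ) * w + p 1‖ ≤ 1}

noncomputable def ellLin (w : UpperHalfPlane) : (Fin 2 → ℝ) →ₗ[ℝ] (Fin 2 → ℝ) :=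
  Matrix.toLin' !![w.re, 1; w.im, 0]

lemma sEll_eq (w : UpperHalfPlane) :
    sEll w = ellLin w ⁻¹' (Complex.measurableEquivPi.symm ⁻¹' (Metric.closedBall 0 1)) := by
  ext p
  simp only [sEll, Set.mem_ofPred_eq, Set.mem_preimage, mem_closedBall_zero_iff]
  have : (p 0 : ℂ) * w + p 1 = Complex.measurableEquivPi.symm (ellLin w p) := by
    rw [Complex.measurableEquivPi_symm_apply]
    apply Complex.ext <;> simp [ellLin, Matrix.mulVec, dotProduct, Fin.sum_univ_two] <;> ring
  rw [this]

lemma sEll_convex (w : UpperHalfPlane) : Convex ℝ (sEll w) := by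
  intro p hp q hq a b ha hb hab
  simp only [sEll, Set.mem_ofPred_eq] at *
  have : (((a • p + b • q) 0 : ℝ) : ℂ) * w + (((a • p + b • q) 1 : ℝ) : ℂ) =
    a * ((p 0 : ℂ) * w + p 1) + b * ((q 0 : ℂ) * w + q 1) := by
    simp; ring
  rw [this]
  calc _ ≤ ‖(a : ℂ) * ((p 0 : ℂ) * w + p 1)‖ + ‖(b : ℂ) * ((q 0 : ℂ) * w + q 1)‖ := norm_add_le _ _
    _ = a * ‖((p 0 : ℂ) * w + p 1)‖ + b * ‖((q 0 : ℂ) * w + q 1)‖ := by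
      rw [norm_mul, norm_mul]; simp [abs_of_nonneg ha, abs_of_nonneg hb]
    _ ≤ a * 1 + b * 1 := by gcongr
    _ = 1 := by linarith

lemma sEll_vol (w : UpperHalfPlane) : volume.real (sEll w) = Real.pi / w.im := by
  have hy := w.im_pos
  have hdet : LinearMap.det (ellLin w) = -w.im := by
    rw [ellLin, LinearMap.det_toLin', Matrix.det_fin_two]; simp
  rw [sEll_eq, Measure.real, Measure.addHaar_preimage_linearMap _ (by rw [hdet]; simpa using hy.ne'),
    hdet, Complex.volume_preserving_equiv_pi.symm.measure_preimage_equiv, Complex.volume_closedBall]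
  simp [abs_of_pos hy]
  field_simp
  rw [ENNReal.toReal_ofReal (by positivity)]
  field_simp

lemma sEll_closed (w : UpperHalfPlane) : IsClosed (sEll w) := by
  apply isClosed_le _ continuous_const
  fun_prop

lemma sEll_bounded (w : UpperHalfPlane) : Bornology.IsBounded (sEll w) := by
  rw [isBounded_iff_forall_norm_le]
  have hy := w.im_pos
  refine ⟨1 + (1 + |w.re|) / w.im, fun p hp => ?_⟩
  simp only [sEll, Set.mem_ofPred_eq] at hp
  have him : |(p 0 : ℝ) * w.im| ≤ 1 := by
    have := (Complex.abs_im_le_norm ((p 0 : ℂ) * w + p 1)).trans hp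
    simpa using this
  have hre : |(p 0 : ℝ) * w.re + p 1| ≤ 1 := by
    have := (Complex.abs_re_le_norm ((p 0 : ℂ) * w + p 1)).trans hp
    simpa using this
  rw [abs_mul, abs_of_pos hy] at him
  have h0 : |(p 0 : ℝ)| ≤ 1 / w.im := by rwa [le_div_iff₀ hy]
  have e : 1 + (1 + |w.re|) / w.im = 1 + 1 / w.im + 1 / w.im * |w.re| := by ring
  rw [e, pi_norm_le_iff_of_nonneg (by positivity)]
  have hp2 : 0 ≤ 1 / w.im * |w.re| := by positivity
  have hp3 : 0 ≤ 1 / w.im := by positivity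
  intro i
  fin_cases i
  · change |p 0| ≤ _
    linarith
  · change |p 1| ≤ _
    calc |p 1| = |(p 0 * w.re + p 1) - p 0 * w.re| := by ring_nf
        _ ≤ |p 0 * w.re + p 1| + |p 0 * w.re| := abs_sub _ _
        _ ≤ 1 + 1 / w.im * |w.re| := by rw [abs_mul (p 0)]; gcongr
        _ ≤ _ := by linarith

open Pointwise in
lemma sEll_card (w : UpperHalfPlane) {x : ℝ} (hx : 0 < x) :
    Nat.card ↑(sEll w ∩ x⁻¹ • (Submodule.span ℤ (Set.range (Pi.basisFun ℝ (Fin 2))) : Set (Fin 2 → ℝ)))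
      = (LB w x).ncard + 1 := by
  have h1 : (insert 0 (LB w x)).ncard = (LB w x).ncard + 1 :=
    Set.ncard_insert_of_notMem (fun h => h.1 rfl) (LB_finite w x)
  rw [← h1, Nat.card_coe_set_eq]
  symm
  refine Set.ncard_congr (fun v _ => x⁻¹ • (fun i => (v i : ℝ))) ?_ ?_ ?_
  · intro v hv
    have hv' : ‖(v 0 : ℂ) * w + v 1‖ ≤ x := by
      rcases hv with rfl | hv
      · simpa using hx.le
      · exact hv.2
    refine ⟨?_, Set.smul_mem_smul_set ?_⟩
    · simp only [sEll, Set.mem_ofPred_eq]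
      calc _ = ‖(x⁻¹ : ℂ) * ((v 0 : ℂ) * w + v 1)‖ := by
            congr 1; simp; ring
        _ = x⁻¹ * ‖(v 0 : ℂ) * w + v 1‖ := by
            rw [norm_mul]; simp [abs_of_pos hx]
        _ ≤ x⁻¹ * x := by gcongr
        _ = 1 := by field_simp
    · rw [SetLike.mem_coe, Module.Basis.mem_span_iff_repr_mem]
      intro i
      simp
  · intro v v' _ _ h
    have := smul_right_injective _ (inv_ne_zero hx.ne') h
    ext i
    have := congrFun this i
    exact_mod_cast this
  · rintro p ⟨hp, q, hq, rfl⟩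
    rw [SetLike.mem_coe, Module.Basis.mem_span_iff_repr_mem] at hq
    simp only [Pi.basisFun_repr] at hq
    choose v hv using hq
    have hq' : (fun i => (v i : ℝ)) = q := by ext i; simpa using hv i
    subst hq'
    refine ⟨v, ?_, rfl⟩
    by_cases h0 : v = 0
    · left; exact h0
    right
    refine ⟨h0, ?_⟩
    simp only [sEll, Set.mem_ofPred_eq] at hp
    calc _ = ‖(x : ℂ) * ((x⁻¹ : ℂ) * ((v 0 : ℂ) * w + v 1))‖ := by
            rw [mul_inv_cancel_left₀]; exact_mod_cast hx.ne'
      _ = x * ‖(x⁻¹ : ℂ) * ((v 0 : ℂ) * w + v 1)‖ := by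
            rw [norm_mul]; simp [abs_of_pos hx]
      _ ≤ x * 1 := by
            gcongr
            refine le_trans (le_of_eq ?_) hp
            congr 1; simp; ring
      _ = x := mul_one x

open Pointwise in
lemma LB_tendsto (w : UpperHalfPlane) :
    Tendsto (fun R : ℝ => ((LB w R).ncard : ℝ) / R ^ 2) atTop (𝓝 (Real.pi / w.im)) := by
  have h := tendsto_card_div_pow_atTop_volume' (sEll w) (sEll_bounded w)
    (sEll_closed w).measurableSet ((sEll_convex w).addHaar_frontier volume) (by
      intro x y hx hxy
      rintro _ ⟨p, hp, rfl⟩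
      refine ⟨(x / y) • p, ?_, ?_⟩
      · have hy : 0 < y := hx.trans_le hxy
        have h0 : (0 : Fin 2 → ℝ) ∈ sEll w := by simp [sEll]
        exact (sEll_convex w).smul_mem_of_zero_mem h0 hp ⟨by positivity, (div_le_one hy).2 hxy⟩
      · have hy : 0 < y := hx.trans_le hxy
        simp only [smul_smul]
        rw [mul_div_cancel₀ _ hy.ne'])
  rw [sEll_vol] at h
  have h2 : Tendsto (fun R : ℝ => 1 / R ^ 2) atTop (𝓝 0) := by
    simpa using tendsto_pow_neg_atTop (𝕜 := ℝ) (n := 2) (by norm_num)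
  have h3 := h.sub h2
  rw [sub_zero] at h3
  refine h3.congr' ?_
  filter_upwards [eventually_gt_atTop 0] with x hx
  rw [sEll_card w hx]
  simp
  ring

open ArithmeticFunction in
lemma PB_tendsto (w : UpperHalfPlane) :
    Tendsto (fun R : ℝ => ((PB w R).ncard : ℝ) / R ^ 2) atTop (𝓝 (6 / (Real.pi * w.im))) := by
  obtain ⟨D, hD⟩ := exists_DD w
  have hl : 6 / (Real.pi * w.im) = ∑' n : ℕ, (moebius n : ℝ) / (n : ℝ) ^ 2 * (Real.pi / w.im) := by
    rw [tsum_mul_right, moebius_sum]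
    have := Real.pi_pos
    have := w.im_pos
    field_simp
  rw [hl]
  have : ∀ R : ℝ, ((PB w R).ncard : ℝ) / R ^ 2 = ∑' n : ℕ,
    (moebius n : ℝ) * ((LB w (R / n)).ncard : ℝ) / R ^ 2 := by
    intro R
    rw [tsum_div_const, PB_card]
  simp_rw [this]
  refine tendsto_tsum_of_dominated_convergence (bound := fun n : ℕ => 9 * D ^ 2 * (1 / (n : ℝ) ^ 2)) ?_ ?_ ?_
  · exact (Real.summable_one_div_nat_pow.2 (by norm_num)).mul_left _
  · intro n
    by_cases hn : n = 0
    · subst hn; simp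
    have hn' : (0 : ℝ) < n := by positivity
    have h1 := (LB_tendsto w).comp (tendsto_id.atTop_div_const hn')
    have h2 := h1.const_mul ((moebius n : ℝ) / (n : ℝ) ^ 2)
    refine h2.congr' ?_
    filter_upwards [eventually_gt_atTop 0] with R hR
    simp only [Function.comp, id]
    field_simp
  · filter_upwards [eventually_gt_atTop 0] with R hR n
    by_cases hn : n = 0
    · subst hn; simp
    have hn' : (0 : ℝ) < n := by positivity
    have hμ : |(moebius n : ℝ)| ≤ 1 := by
      exact_mod_cast abs_moebius_le_one
    have hb := LB_card_le hD (R := R / n)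
    rw [Real.norm_eq_abs, abs_div, abs_mul, abs_of_nonneg (sq_nonneg R), div_le_iff₀ (by positivity)]
    calc _ ≤ 1 * (9 * D ^ 2 * (R / n) ^ 2) := by
          gcongr
          rw [abs_of_nonneg (by positivity)]; exact hb
      _ = _ := by field_simp

def Sst (ε T : ℝ) : Set UpperHalfPlane := {z | 0 ≤ z.re ∧ z.re < 1 ∧ ε ≤ z.im ∧ z.im < T * ε}

lemma im_smul_row (γ : (Matrix.SpecialLinearGroup (Fin 2) ℤ)) (w : UpperHalfPlane) :
    (γ • w).im = w.im / ‖((γ 1 0 : ℤ) : ℂ) * w + (γ 1 1 : ℤ)‖ ^ 2 := by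
  rw [ModularGroup.im_smul_eq_div_normSq, Complex.normSq_eq_norm_sq, ModularGroup.denom_apply]

lemma sl_eq_of (γ β : (Matrix.SpecialLinearGroup (Fin 2) ℤ)) (w : UpperHalfPlane) (hrow : γ 1 = β 1) (h : γ • w = β • w) : γ = β := by
  have h1 := congrArg UpperHalfPlane.coe h
  have r0 : γ 1 0 = β 1 0 := congrFun hrow 0
  have r1 : γ 1 1 = β 1 1 := congrFun hrow 1
  rw [UpperHalfPlane.coe_specialLinearGroup_apply, UpperHalfPlane.coe_specialLinearGroup_apply, r0, r1] at h1
  have hne : ((algebraMap ℤ ℝ (β 1 0) : ℝ) : ℂ) * w + ((algebraMap ℤ ℝ (β 1 1) : ℝ) : ℂ) ≠ 0 := by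
    have := UpperHalfPlane.denom_ne_zero (β : GL (Fin 2) ℝ) w
    rw [ModularGroup.denom_apply] at this
    simpa using this
  rw [div_left_inj' hne] at h1
  have him := congrArg Complex.im h1
  have hre := congrArg Complex.re h1
  have hy := w.im_pos.ne'
  simp at him hre
  have a0 : γ 0 0 = β 0 0 := by
    rcases him with h | h
    · exact_mod_cast h
    · exact absurd h hy
  have a1 : γ 0 1 = β 0 1 := by
    rw [a0] at hre
    have : ((γ 0 1 : ℤ) : ℝ) = ((β 0 1 : ℤ) : ℝ) := by linarith
    exact_mod_cast this
  ext i j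
  fin_cases i <;> fin_cases j
  exacts [a0, a1, r0, r1]

lemma Sst_encard (w : UpperHalfPlane) {ε T : ℝ} (hε : 0 < ε) (hT : 1 < T) :
    {γ : (Matrix.SpecialLinearGroup (Fin 2) ℤ) | γ • w ∈ Sst ε T}.encard =
      (PB w (√(w.im / ε)) \ PB w (√(w.im / (T * ε)))).encard := by
  have hy := w.im_pos
  have hcond : ∀ γ : (Matrix.SpecialLinearGroup (Fin 2) ℤ), (ε ≤ (γ • w).im ∧ (γ • w).im < T * ε) ↔
      γ 1 ∈ (PB w (√(w.im / ε)) \ PB w (√(w.im / (T * ε)))) := by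
    intro γ
    have hne : ((γ 1 0 : ℤ) : ℂ) * w + (γ 1 1 : ℤ) ≠ 0 := by
      have := UpperHalfPlane.denom_ne_zero (γ : GL (Fin 2) ℝ) w
      rwa [ModularGroup.denom_apply] at this
    have hn : 0 < ‖((γ 1 0 : ℤ) : ℂ) * w + (γ 1 1 : ℤ)‖ := norm_pos_iff.2 hne
    have hc : IsCoprime (γ 1 0) (γ 1 1) := ModularGroup.bottom_row_coprime γ
    have hTε : 0 < T * ε := by positivity
    rw [im_smul_row]
    simp only [PB, Set.mem_diff, Set.mem_ofPred_eq, hc, true_and, not_le]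
    rw [Real.le_sqrt hn.le (by positivity), Real.sqrt_lt' hn, le_div_iff₀ (by positivity),
      div_lt_iff₀ (by positivity), le_div_iff₀ hε, div_lt_iff₀ hTε, mul_comm ε, mul_comm (T * ε)]
  have hinj : Set.InjOn (fun γ : (Matrix.SpecialLinearGroup (Fin 2) ℤ) => γ 1) {γ : (Matrix.SpecialLinearGroup (Fin 2) ℤ) | γ • w ∈ Sst ε T} := by
    rintro γ ⟨g1, g2, -, -⟩ β ⟨b1, b2, -, -⟩ hrow
    simp only at hrow
    apply sl_eq_of γ β w hrow
    have r0 : γ 1 0 = β 1 0 := congrFun hrow 0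
    have r1 : γ 1 1 = β 1 1 := congrFun hrow 1
    have hc : (γ * β⁻¹) 1 0 = 0 := by
      rw [Matrix.SpecialLinearGroup.coe_mul, Matrix.SpecialLinearGroup.coe_inv,
        Matrix.adjugate_fin_two]
      simp [Matrix.mul_apply, Fin.sum_univ_two, r0, r1]
      ring
    obtain ⟨n, hn⟩ := ModularGroup.exists_eq_T_zpow_of_c_eq_zero hc
    have h1 := hn (β • w)
    rw [smul_smul, inv_mul_cancel_right] at h1
    have h2 := congrArg UpperHalfPlane.re h1
    rw [ModularGroup.re_T_zpow_smul] at h2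
    have h3 : (n : ℝ) < 1 := by linarith
    have h4 : (-1 : ℝ) < n := by linarith
    have h5 : n < 1 := by exact_mod_cast h3
    have h6 : -1 < n := by exact_mod_cast h4
    have : n = 0 := by omega
    rw [h1, this]; simp
  rw [← hinj.encard_image]
  congr 1
  ext v
  constructor
  · rintro ⟨γ, ⟨-, -, h⟩, rfl⟩
    exact (hcond γ).1 h
  · intro hv
    obtain ⟨γ, -, hγ⟩ := ModularGroup.bottom_row_surj (R := ℤ) (a := v) hv.1.1
    have hrow : ∀ n : ℤ, (ModularGroup.T ^ n * γ : (Matrix.SpecialLinearGroup (Fin 2) ℤ)) 1 = v := by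
      intro n
      rw [← hγ]
      exact ModularGroup.T_pow_mul_apply_one n γ
    refine ⟨ModularGroup.T ^ (-⌊(γ • w).re⌋) * γ, ?_, hrow _⟩
    have h1 := (hcond (ModularGroup.T ^ (-⌊(γ • w).re⌋) * γ)).2 (by rw [hrow]; exact hv)
    refine ⟨?_, ?_, h1⟩
    · rw [mul_smul, ModularGroup.re_T_zpow_smul]
      push_cast
      linarith [Int.floor_le (γ • w).re]
    · rw [mul_smul, ModularGroup.re_T_zpow_smul]
      push_cast
      linarith [Int.lt_floor_add_one (γ • w).re]

noncomputable def NN (ε T : ℝ) (w : UpperHalfPlane) : ℝ :=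
  ((PB w (√(w.im / ε))).ncard : ℝ) - ((PB w (√(w.im / (T * ε)))).ncard : ℝ)

lemma tsum_Sst (w : UpperHalfPlane) {ε T : ℝ} (hε : 0 < ε) (hT : 1 < T) :
    ∑' γ : (Matrix.SpecialLinearGroup (Fin 2) ℤ), (Sst ε T).indicator (fun _ => (1 : ENNReal)) (γ • w) = ENNReal.ofReal (NN ε T w) := by
  have h1 : ∀ γ : (Matrix.SpecialLinearGroup (Fin 2) ℤ), (Sst ε T).indicator (fun _ => (1 : ENNReal)) (γ • w) =
    ({γ : (Matrix.SpecialLinearGroup (Fin 2) ℤ) | γ • w ∈ Sst ε T}).indicator (fun _ => 1) γ := by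
    intro γ; simp [Set.indicator]
  simp_rw [h1]
  rw [← tsum_subtype, ENNReal.tsum_set_one, Sst_encard w hε hT]
  have hsub : PB w (√(w.im / (T * ε))) ⊆ PB w (√(w.im / ε)) := by
    rintro v ⟨h1, h2⟩
    refine ⟨h1, h2.trans (Real.sqrt_le_sqrt ?_)⟩
    have := w.im_pos
    gcongr
    nlinarith
  have hf := (PB_finite w (√(w.im / ε)))
  rw [← (hf.subset Set.diff_subset).cast_ncard_eq, Set.ncard_diff hsub (PB_finite _ _), NN,
    ← Nat.cast_sub (Set.ncard_le_ncard hsub hf)]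
  simp

lemma Sst_meas (ε T : ℝ) : MeasurableSet (Sst ε T) := by
  have h1 : Measurable UpperHalfPlane.re := UpperHalfPlane.continuous_re.measurable
  have h2 : Measurable UpperHalfPlane.im := UpperHalfPlane.continuous_im.measurable
  exact ((measurableSet_le measurable_const h1).inter ((measurableSet_lt h1 measurable_const).inter
    ((measurableSet_le measurable_const h2).inter (measurableSet_lt h2 measurable_const))))

lemma unfold_g {g} (h : Nice g) {ε T : ℝ} (hε : 0 < ε) (hT : 1 < T) :
    2 * ∫⁻ z, (Sst ε T).indicator (fun z => ENNReal.ofReal (g z)) z =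
      ∫⁻ w in ModularGroup.fdo, ENNReal.ofReal (g w) * ENNReal.ofReal (NN ε T w) := by
  rw [unfold_lint _ (h.cont.measurable.ennreal_ofReal.indicator (Sst_meas ε T))]
  congr 1; ext w
  rw [← tsum_Sst w hε hT, ← ENNReal.tsum_mul_left]
  congr 1; ext γ
  by_cases hw : γ • w ∈ Sst ε T
  · rw [Set.indicator_of_mem hw, Set.indicator_of_mem hw, h.inv, mul_one]
  · rw [Set.indicator_of_notMem hw, Set.indicator_of_notMem hw, mul_zero]

lemma NN_meas {ε T : ℝ} (hε : 0 < ε) (hT : 1 < T) :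
    Measurable (fun w => ENNReal.ofReal (NN ε T w)) := by
  simp_rw [← fun w => tsum_Sst w hε hT]
  exact Measurable.ennreal_tsum fun γ =>
    (measurable_const.indicator (Sst_meas ε T)).comp (mp_sl2z γ).measurable

lemma fdo_DD {w : UpperHalfPlane} (hw : w ∈ ModularGroup.fdo) : DD w 2 := by
  have h1 : 1 < w.re ^ 2 + w.im ^ 2 := by
    have := hw.1
    rw [Complex.normSq_apply] at this
    simpa [sq] using this
  have h2 : |w.re| < 1 / 2 := hw.2
  have h3 := w.im_pos
  have h4 : w.re ^ 2 < 1 / 4 := by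
    rw [← sq_abs]; nlinarith [abs_nonneg w.re]
  have h5 : 1 / 2 < w.im := by nlinarith
  constructor
  · rw [div_le_iff₀ h3]; linarith
  · have : |w.re| / w.im ≤ 1 := by rw [div_le_one h3]; linarith
    linarith

lemma NN_le {w : UpperHalfPlane} (hw : w ∈ ModularGroup.fdo) {ε T : ℝ} (hε : 0 < ε) :
    ε * NN ε T w ≤ 36 * w.im := by
  have h1 := LB_card_le (fdo_DD hw) (R := √(w.im / ε))
  have h2 : ((PB w (√(w.im / ε))).ncard : ℝ) ≤ (LB w (√(w.im / ε))).ncard := by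
    exact_mod_cast Set.ncard_le_ncard (PB_subset _ _) (LB_finite _ _)
  have h3 := w.im_pos
  rw [Real.sq_sqrt (by positivity)] at h1
  have h4 : NN ε T w ≤ 9 * 2 ^ 2 * (w.im / ε) := by
    unfold NN
    have : (0 : ℝ) ≤ ((PB w (√(w.im / (T * ε)))).ncard : ℝ) := by positivity
    linarith
  calc ε * NN ε T w ≤ ε * (9 * 2 ^ 2 * (w.im / ε)) := by gcongr
    _ = 36 * w.im := by field_simp; ring

lemma PBe_tendsto (w : UpperHalfPlane) {s : ℝ} (hs : 0 < s) :
    Tendsto (fun ε : ℝ => ε * ((PB w (√(w.im / (s * ε)))).ncard : ℝ)) (𝓝[>] 0)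
      (𝓝 (6 / (Real.pi * s))) := by
  have h3 := w.im_pos
  have h1 : Tendsto (fun ε : ℝ => √(w.im / (s * ε))) (𝓝[>] 0) atTop := by
    apply Real.tendsto_sqrt_atTop.comp
    have : (fun ε : ℝ => w.im / (s * ε)) = fun ε => (w.im / s) * ε⁻¹ := by
      ext ε; rw [div_mul_eq_div_div, div_eq_mul_inv]
    rw [this]
    exact tendsto_inv_nhdsGT_zero.const_mul_atTop (by positivity)
  have h2 := ((PB_tendsto w).comp h1).mul_const (w.im / s)
  have e : 6 / (Real.pi * w.im) * (w.im / s) = 6 / (Real.pi * s) := by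
    have := Real.pi_pos
    field_simp
  rw [e] at h2
  refine h2.congr' ?_
  filter_upwards [self_mem_nhdsWithin] with ε hε
  have hε : 0 < ε := hε
  simp only [Function.comp]
  rw [Real.sq_sqrt (by positivity)]
  field_simp

lemma NN_tendsto (w : UpperHalfPlane) {T : ℝ} (hT : 1 < T) :
    Tendsto (fun ε : ℝ => ε * NN ε T w) (𝓝[>] 0) (𝓝 (6 / Real.pi * (1 - 1 / T))) := by
  have h1 := PBe_tendsto w one_pos
  have h2 := PBe_tendsto w (show 0 < T by linarith)
  have := h1.sub h2
  have hp := Real.pi_pos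
  convert this using 1
  · ext ε; simp [NN]; ring
  · have : T ≠ 0 := by positivity
    congr 1; field_simp

lemma fdo_fin {g} (h : Nice g) : ∃ B : ENNReal, B ≠ ⊤ ∧
    ∫⁻ w in ModularGroup.fdo, (1 + ENNReal.ofReal (36 * w.im)) * ENNReal.ofReal (g w) ≤ B := by
  obtain ⟨Y, hY, hs⟩ := h.supp
  obtain ⟨M, hM, hb⟩ := h.bdd
  set K := ModularGroup.truncatedFundamentalDomain Y
  have hK := ModularGroup.isCompact_truncatedFundamentalDomain Y
  have hle : ∀ w ∈ ModularGroup.fdo, (1 + ENNReal.ofReal (36 * w.im)) * ENNReal.ofReal (g w) ≤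
      K.indicator (fun _ => (1 + ENNReal.ofReal (36 * Y)) * ENNReal.ofReal M) w := by
    intro w hw
    by_cases hy : Y < w.im
    · simp [hs w hy]
    · have : w ∈ K := ⟨ModularGroup.fdo_subset_fd hw, not_lt.1 hy⟩
      rw [Set.indicator_of_mem this]
      gcongr
      · exact not_lt.1 hy
      · exact (le_abs_self _).trans (hb w)
  refine ⟨_, ?_, (setLIntegral_mono' ModularGroup.isOpen_fdo.measurableSet hle).trans
    (setLIntegral_le_lintegral _ _)⟩
  rw [lintegral_indicator hK.measurableSet, lintegral_const]
  refine ENNReal.mul_ne_top (ENNReal.mul_ne_top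
    (ENNReal.add_ne_top.2 ⟨ENNReal.one_ne_top, ENNReal.ofReal_ne_top⟩) (by simp)) ?_
  simp [hK.measure_lt_top.ne]

lemma Sst_tendsto {g} (h : Nice g) {T : ℝ} (hT : 1 < T) :
    Tendsto (fun ε : ℝ => ENNReal.ofReal ε *
      (2 * ∫⁻ z, (Sst ε T).indicator (fun z => ENNReal.ofReal (g z)) z)) (𝓝[>] 0)
      (𝓝 (∫⁻ w in ModularGroup.fdo, ENNReal.ofReal (g w) * ENNReal.ofReal (6 / Real.pi * (1 - 1 / T)))) := by
  obtain ⟨B, hB, hB'⟩ := fdo_fin h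
  have hlim : Tendsto (fun ε : ℝ => ∫⁻ w in ModularGroup.fdo, ENNReal.ofReal (g w) *
      (ENNReal.ofReal ε * ENNReal.ofReal (NN ε T w))) (𝓝[>] 0)
      (𝓝 (∫⁻ w in ModularGroup.fdo, ENNReal.ofReal (g w) * ENNReal.ofReal (6 / Real.pi * (1 - 1 / T)))) := by
    refine tendsto_lintegral_filter_of_dominated_convergence
      (fun w => (1 + ENNReal.ofReal (36 * w.im)) * ENNReal.ofReal (g w)) ?_ ?_ ?_ ?_
    · filter_upwards [self_mem_nhdsWithin] with ε hε
      exact h.cont.measurable.ennreal_ofReal.mul ((NN_meas hε hT).const_mul _)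
    · filter_upwards [self_mem_nhdsWithin] with ε hε
      filter_upwards [ae_restrict_mem ModularGroup.isOpen_fdo.measurableSet] with w hw
      rw [mul_comm]
      gcongr
      rw [← ENNReal.ofReal_mul (le_of_lt hε)]
      refine le_trans (ENNReal.ofReal_le_ofReal (NN_le hw hε)) le_add_self
    · exact (hB'.trans_lt hB.lt_top).ne
    · filter_upwards with w
      apply ENNReal.Tendsto.const_mul _ (Or.inr ENNReal.ofReal_ne_top)
      refine (ENNReal.tendsto_ofReal (NN_tendsto w hT)).congr' ?_
      filter_upwards [self_mem_nhdsWithin] with ε hε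
      rw [← ENNReal.ofReal_mul (le_of_lt hε)]
  refine hlim.congr' ?_
  filter_upwards [self_mem_nhdsWithin] with ε hε
  rw [unfold_g h hε hT, ← lintegral_const_mul' _ _ ENNReal.ofReal_ne_top]
  congr 1; ext w; ring

lemma Sst_rect {g} (h : Nice g) {ε T : ℝ} (hε : 0 < ε) :
    ∫⁻ z, (Sst ε T).indicator (fun z => ENNReal.ofReal (g z)) z =
      ∫⁻ x in Set.Ico (0 : ℝ) 1, ∫⁻ y in Set.Ico ε (T * ε),
        ENNReal.ofReal (g (hpt x y)) * ENNReal.ofReal (1 / y ^ 2) := by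
  rw [lint_hpt _ (h.cont.measurable.ennreal_ofReal.indicator (Sst_meas ε T))]
  have hpos : MeasurableSet {p : ℝ × ℝ | 0 < p.2} := measurableSet_lt measurable_const measurable_snd
  have hr : MeasurableSet (Set.Ico (0 : ℝ) 1 ×ˢ Set.Ico ε (T * ε)) :=
    measurableSet_Ico.prod measurableSet_Ico
  have hsub : Set.Ico (0 : ℝ) 1 ×ˢ Set.Ico ε (T * ε) ⊆ {p : ℝ × ℝ | 0 < p.2} :=
    fun p hp => hε.trans_le hp.2.1
  have hm : AEMeasurable (fun p : ℝ × ℝ => ENNReal.ofReal (g (hpt p.1 p.2)) * ENNReal.ofReal (1 / p.2 ^ 2))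
     ((volume.restrict (Set.Ico (0 : ℝ) 1)).prod (volume.restrict (Set.Ico ε (T * ε)))) := by
    rw [Measure.prod_restrict]
    refine AEMeasurable.mul ?_ (Measurable.aemeasurable (f := fun p : ℝ × ℝ =>
      ENNReal.ofReal (1 / p.2 ^ 2)) (by fun_prop))
    apply AEMeasurable.ennreal_ofReal
    exact (h.cont.comp_continuousOn (continuous_hpt.mono hsub)).aemeasurable hr
  rw [lintegral_lintegral hm, Measure.prod_restrict, ← Measure.volume_eq_prod,
    ← lintegral_indicator hpos, ← lintegral_indicator hr]
  congr 1; ext p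
  by_cases hp : 0 < p.2
  · rw [Set.indicator_of_mem (show p ∈ {p : ℝ × ℝ | 0 < p.2} from hp)]
    have : hpt p.1 p.2 ∈ Sst ε T ↔ p ∈ Set.Ico (0 : ℝ) 1 ×ˢ Set.Ico ε (T * ε) := by
      simp [Sst, hpt_re hp, hpt_im hp, and_assoc]
    by_cases hq : p ∈ Set.Ico (0 : ℝ) 1 ×ˢ Set.Ico ε (T * ε)
    · rw [Set.indicator_of_mem (this.2 hq), Set.indicator_of_mem hq]
    · rw [Set.indicator_of_notMem (fun h => hq (this.1 h)), Set.indicator_of_notMem hq]; simp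
  · rw [Set.indicator_of_notMem (show p ∉ {p : ℝ × ℝ | 0 < p.2} from hp),
      Set.indicator_of_notMem (fun h => hp (hsub h))]

lemma lint_inv_sq {ε T : ℝ} (hε : 0 < ε) (hT : 1 < T) :
    ∫⁻ y in Set.Ico ε (T * ε), ENNReal.ofReal (1 / y ^ 2) = ENNReal.ofReal ((1 - 1 / T) / ε) := by
  have hle : ε ≤ T * ε := by nlinarith
  have h0 : (0 : ℝ) ∉ Set.uIcc ε (T * ε) := by
    rw [Set.uIcc_of_le hle]; intro h; linarith [h.1]
  rw [restrict_Ico_eq_restrict_Ioc]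
  rw [← ofReal_integral_eq_lintegral_ofReal]
  · rw [← intervalIntegral.integral_of_le hle]
    congr 1
    have : ∫ y in ε..(T * ε), 1 / y ^ 2 = ∫ y in ε..(T * ε), y ^ (-2 : ℤ) := by
      congr 1; ext y; simp [zpow_neg]
    rw [this, integral_zpow (Or.inr ⟨by norm_num, h0⟩)]
    norm_num
    field_simp
    ring
  · apply IntegrableOn.mono_set _ Set.Ioc_subset_Icc_self
    apply ContinuousOn.integrableOn_Icc
    intro y hy
    have h1 : 0 < y := hε.trans_le hy.1
    have : y ^ 2 ≠ 0 := by positivity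
    exact (continuousAt_const.div (continuousAt_id.pow 2) this).continuousWithinAt
  · filter_upwards with y
    positivity

lemma cont_row {g} (h : Nice g) {ε : ℝ} (hε : 0 < ε) : Continuous fun x : ℝ => g (hpt x ε) := by
  have : ContinuousOn (fun x : ℝ => g (hpt x ε)) Set.univ :=
    h.cont.comp_continuousOn (continuous_hpt.comp (f := fun x : ℝ => (x, ε)) (by fun_prop)
      (fun x _ => hε))
  exact continuousOn_univ.1 this

lemma dist_vert (x : ℝ) {y y' : ℝ} (hy : 0 < y) (hy' : 0 < y') :
    dist (hpt x y) (hpt x y') = |Real.log y - Real.log y'| := by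
  rw [UpperHalfPlane.dist_of_re_eq (by rw [hpt_re hy, hpt_re hy']), hpt_im hy, hpt_im hy', Real.dist_eq]

lemma sandwich {g} (h : Nice g) (h0 : ∀ z, 0 ≤ g z) {e ε T : ℝ} (he : 0 < e) (hε : 0 < ε) (hT : 1 < T)
    (hun : ∀ x y : ℝ, ε ≤ y → y < T * ε → |g (hpt x y) - g (hpt x ε)| ≤ e) :
    |(∫ x in (0:ℝ)..1, g (hpt x ε)) - (ENNReal.ofReal ε *
      (2 * ∫⁻ z, (Sst ε T).indicator (fun z => ENNReal.ofReal (g z)) z)).toReal / (2 * (1 - 1 / T))| ≤ e := by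
  have hk : 0 < 1 - 1 / T := by
    have : 1 / T < 1 := by rw [div_lt_one (by linarith)]; exact hT
    linarith
  set A := ∫⁻ z, (Sst ε T).indicator (fun z => ENNReal.ofReal (g z)) z with hA
  set L := ∫ x in (0:ℝ)..1, g (hpt x ε) with hL
  have hcr := cont_row h hε
  have hL0 : 0 ≤ L := intervalIntegral.integral_nonneg zero_le_one fun x _ => h0 _
  have hLl : ∫⁻ x in Set.Ico (0 : ℝ) 1, ENNReal.ofReal (g (hpt x ε)) = ENNReal.ofReal L := by
    rw [restrict_Ico_eq_restrict_Ioc, hL, intervalIntegral.integral_of_le zero_le_one,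
      ofReal_integral_eq_lintegral_ofReal]
    · exact hcr.integrableOn_Ioc
    · filter_upwards with x using h0 _
  have hc : ∀ a : ENNReal, ∫⁻ y in Set.Ico ε (T * ε), a * ENNReal.ofReal (1 / y ^ 2) =
      a * ENNReal.ofReal ((1 - 1 / T) / ε) := by
    intro a
    rw [lintegral_const_mul _ (by fun_prop), lint_inv_sq hε hT]
  have h1 : A ≤ (ENNReal.ofReal L + ENNReal.ofReal e) * ENNReal.ofReal ((1 - 1 / T) / ε) := by
    rw [hA, Sst_rect h hε]
    calc _ ≤ ∫⁻ x in Set.Ico (0 : ℝ) 1, ∫⁻ y in Set.Ico ε (T * ε),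
        (ENNReal.ofReal (g (hpt x ε)) + ENNReal.ofReal e) * ENNReal.ofReal (1 / y ^ 2) := by
          apply lintegral_mono fun x => ?_
          apply setLIntegral_mono' measurableSet_Ico fun y hy => ?_
          gcongr
          rw [← ENNReal.ofReal_add (h0 _) he.le]
          apply ENNReal.ofReal_le_ofReal
          linarith [(abs_le.1 (hun x y hy.1 hy.2)).2]
      _ = _ := by
          simp_rw [hc]
          rw [lintegral_mul_const' _ _ ENNReal.ofReal_ne_top, lintegral_add_right _ measurable_const, hLl]
          simp
  have h2 : ENNReal.ofReal L * ENNReal.ofReal ((1 - 1 / T) / ε) ≤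
      A + ENNReal.ofReal e * ENNReal.ofReal ((1 - 1 / T) / ε) := by
    rw [hA, Sst_rect h hε]
    calc _ = ∫⁻ x in Set.Ico (0 : ℝ) 1, ∫⁻ y in Set.Ico ε (T * ε),
        (ENNReal.ofReal (g (hpt x ε))) * ENNReal.ofReal (1 / y ^ 2) := by
          simp_rw [hc]
          rw [lintegral_mul_const' _ _ ENNReal.ofReal_ne_top, hLl]
      _ ≤ ∫⁻ x in Set.Ico (0 : ℝ) 1, ((∫⁻ y in Set.Ico ε (T * ε),
        (ENNReal.ofReal (g (hpt x y))) * ENNReal.ofReal (1 / y ^ 2)) +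
          ENNReal.ofReal e * ENNReal.ofReal ((1 - 1 / T) / ε)) := by
          apply lintegral_mono fun x => ?_
          simp only
          rw [← hc, ← lintegral_add_right _ (by fun_prop)]
          apply setLIntegral_mono' measurableSet_Ico fun y hy => ?_
          rw [← add_mul]
          gcongr
          rw [← ENNReal.ofReal_add (h0 _) he.le]
          apply ENNReal.ofReal_le_ofReal
          linarith [(abs_le.1 (hun x y hy.1 hy.2)).1]
      _ = _ := by
          rw [lintegral_add_right _ measurable_const]
          simp
  have hAt : A ≠ ⊤ := ne_top_of_le_ne_top (ENNReal.mul_ne_top (by simp) (by simp)) h1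
  set a := A.toReal with ha
  have hAa : A = ENNReal.ofReal a := (ENNReal.ofReal_toReal hAt).symm
  have ha0 : 0 ≤ a := ENNReal.toReal_nonneg
  have hq : 0 < (1 - 1 / T) / ε := by positivity
  rw [hAa, ← ENNReal.ofReal_add hL0 he.le, ← ENNReal.ofReal_mul (by positivity),
    ENNReal.ofReal_le_ofReal_iff (by positivity)] at h1
  rw [hAa, ← ENNReal.ofReal_mul hL0, ← ENNReal.ofReal_mul he.le, ← ENNReal.ofReal_add ha0 (by positivity),
    ENNReal.ofReal_le_ofReal_iff (by positivity)] at h2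
  have e1 : (ENNReal.ofReal ε * (2 * A)).toReal = ε * (2 * a) := by
    rw [ENNReal.toReal_mul, ENNReal.toReal_mul, ENNReal.toReal_ofReal hε.le, ← ha]; simp
  rw [e1]
  have e2 : ε * (2 * a) / (2 * (1 - 1 / T)) = a / ((1 - 1 / T) / ε) := by
    field_simp
  rw [e2, abs_le]
  have h3 : a / ((1 - 1 / T) / ε) ≤ L + e := by rw [div_le_iff₀ hq]; exact h1
  have h4 : L - e ≤ a / ((1 - 1 / T) / ε) := by rw [le_div_iff₀ hq]; linarith
  constructor <;> linarith

lemma partI_pos {g} (h : Nice g) (h0 : ∀ z, 0 ≤ g z) :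
    Tendsto (fun ε : ℝ => ∫ x in (0:ℝ)..1, g (hpt x ε)) (𝓝[>] 0)
      (𝓝 (3 / Real.pi * (∫⁻ w in ModularGroup.fdo, ENNReal.ofReal (g w)).toReal)) := by
  rw [Metric.tendsto_nhds]
  intro e he
  obtain ⟨δ, hδ, hu⟩ := h.unif (e / 4) (by positivity)
  set T := Real.exp (δ / 2) with hTd
  have hT : 1 < T := by rw [hTd]; exact Real.one_lt_exp_iff.2 (by positivity)
  have hk : 0 < 1 - 1 / T := by
    have : 1 / T < 1 := by rw [div_lt_one (by linarith)]; exact hT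
    linarith
  set J := ∫⁻ w in ModularGroup.fdo, ENNReal.ofReal (g w) with hJ
  have hJt : J ≠ ⊤ := by
    obtain ⟨B, hB, hB'⟩ := fdo_fin h
    refine ne_top_of_le_ne_top hB (le_trans (lintegral_mono fun w => ?_) hB')
    simp only
    exact le_mul_of_one_le_left zero_le le_self_add
  have hlim := Sst_tendsto h hT
  rw [lintegral_mul_const' _ _ ENNReal.ofReal_ne_top, ← hJ] at hlim
  have hlim2 := ((ENNReal.tendsto_toReal (ENNReal.mul_ne_top hJt ENNReal.ofReal_ne_top)).comp
    hlim).div_const (2 * (1 - 1 / T))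
  have e1 : (J * ENNReal.ofReal (6 / Real.pi * (1 - 1 / T))).toReal / (2 * (1 - 1 / T)) =
      3 / Real.pi * J.toReal := by
    have := Real.pi_pos
    rw [ENNReal.toReal_mul, ENNReal.toReal_ofReal (by positivity)]
    have h1 : 1 - 1 / T ≠ 0 := hk.ne'
    generalize 1 - 1 / T = k at *
    field_simp
    ring
  rw [e1, Metric.tendsto_nhds] at hlim2
  filter_upwards [hlim2 (e / 2) (by positivity), self_mem_nhdsWithin] with ε h1 hε
  have hε : 0 < ε := hε
  have hs := sandwich h h0 (e := e / 4) (by positivity) hε hT (by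
    intro x y hy1 hy2
    refine (hu _ _ ?_).le
    have hy : 0 < y := hε.trans_le hy1
    rw [dist_vert x hy hε]
    have l1 : Real.log ε ≤ Real.log y := Real.log_le_log hε hy1
    have l2 : Real.log y ≤ Real.log (T * ε) := Real.log_le_log hy hy2.le
    rw [Real.log_mul (by positivity) hε.ne', hTd, Real.log_exp] at l2
    rw [abs_of_nonneg (by linarith)]
    linarith)
  rw [Real.dist_eq] at h1 ⊢
  simp only [Function.comp] at h1
  rw [abs_le] at hs
  rw [abs_lt] at h1 ⊢
  constructor <;> linarith [h1.1, h1.2, hs.1, hs.2]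

lemma Nice.pos {g} (h : Nice g) : Nice fun z => max (g z) 0 := by
  obtain ⟨Y, hY, hs⟩ := h.supp
  exact ⟨h.cont.max continuous_const, fun γ z => by rw [h.inv], Y, hY, fun z hz => by simp [hs z hz]⟩

lemma Nice.neg {g} (h : Nice g) : Nice fun z => - g z := by
  obtain ⟨Y, hY, hs⟩ := h.supp
  exact ⟨h.cont.neg, fun γ z => by rw [h.inv], Y, hY, fun z hz => by simp [hs z hz]⟩

lemma fdo_lint (φ : UpperHalfPlane → ℝ) (hφ : Continuous φ) (h0 : ∀ z, 0 ≤ φ z) :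
    ∫⁻ w in ModularGroup.fdo, ENNReal.ofReal (φ w) =
    ∫⁻ p in {p : ℝ × ℝ | |p.1| < 1 / 2 ∧ 1 < p.1 ^ 2 + p.2 ^ 2 ∧ 0 < p.2},
      ENNReal.ofReal (φ (hpt p.1 p.2) / p.2 ^ 2) := by
  have hmo : MeasurableSet ModularGroup.fdo := ModularGroup.isOpen_fdo.measurableSet
  have hpos : MeasurableSet {p : ℝ × ℝ | 0 < p.2} := measurableSet_lt measurable_const measurable_snd
  have hF : MeasurableSet {p : ℝ × ℝ | |p.1| < 1 / 2 ∧ 1 < p.1 ^ 2 + p.2 ^ 2 ∧ 0 < p.2} := by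
    refine (measurableSet_lt (f := fun p : ℝ × ℝ => |p.1|) (by fun_prop) measurable_const).inter
      ((measurableSet_lt (g := fun p : ℝ × ℝ => p.1 ^ 2 + p.2 ^ 2)
        measurable_const (by fun_prop)).inter hpos)
  rw [← lintegral_indicator hmo, lint_hpt _ (hφ.measurable.ennreal_ofReal.indicator hmo),
    ← lintegral_indicator hpos, ← lintegral_indicator hF]
  congr 1; ext p
  by_cases hp : 0 < p.2
  · rw [Set.indicator_of_mem (show p ∈ {p : ℝ × ℝ | 0 < p.2} from hp)]
    have : hpt p.1 p.2 ∈ ModularGroup.fdo ↔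
        p ∈ {p : ℝ × ℝ | |p.1| < 1 / 2 ∧ 1 < p.1 ^ 2 + p.2 ^ 2 ∧ 0 < p.2} := by
      have h1 : hpt p.1 p.2 ∈ ModularGroup.fdo ↔
        1 < Complex.normSq (hpt p.1 p.2 : ℂ) ∧ |(hpt p.1 p.2).re| < 1 / 2 := Iff.rfl
      rw [h1, coe_hpt hp, hpt_re hp, Complex.normSq_apply, Set.mem_ofPred_eq]
      simp only [sq]
      tauto
    by_cases hq : hpt p.1 p.2 ∈ ModularGroup.fdo
    · rw [Set.indicator_of_mem hq, Set.indicator_of_mem (this.1 hq), ← ENNReal.ofReal_mul (h0 _),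
        mul_one_div]
    · rw [Set.indicator_of_notMem hq, Set.indicator_of_notMem (fun h => hq (this.2 h)), zero_mul]
  · rw [Set.indicator_of_notMem (show p ∉ {p : ℝ × ℝ | 0 < p.2} from hp),
      Set.indicator_of_notMem (fun h => hp h.2.2)]

lemma partI {g} (h : Nice g) :
    Tendsto (fun ε : ℝ => ∫ x in (0:ℝ)..1, g (hpt x ε)) (𝓝[>] 0)
      (𝓝 (3 / Real.pi * ∫ p in {p : ℝ × ℝ | |p.1| < 1 / 2 ∧ 1 < p.1 ^ 2 + p.2 ^ 2 ∧ 0 < p.2},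
        g (hpt p.1 p.2) / p.2 ^ 2)) := by
  have hp := h.pos
  have hn := h.neg.pos
  have h1 := (partI_pos hp fun z => le_max_right _ _).sub (partI_pos hn fun z => le_max_right _ _)
  have hpos : MeasurableSet {p : ℝ × ℝ | 0 < p.2} := measurableSet_lt measurable_const measurable_snd
  have hF : MeasurableSet {p : ℝ × ℝ | |p.1| < 1 / 2 ∧ 1 < p.1 ^ 2 + p.2 ^ 2 ∧ 0 < p.2} := by
    refine (measurableSet_lt (f := fun p : ℝ × ℝ => |p.1|) (by fun_prop) measurable_const).inter
      ((measurableSet_lt (g := fun p : ℝ × ℝ => p.1 ^ 2 + p.2 ^ 2)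
        measurable_const (by fun_prop)).inter hpos)
  have hfin : ∀ {φ}, Nice φ → (∫⁻ w in ModularGroup.fdo, ENNReal.ofReal (φ w)) ≠ ⊤ := by
    intro φ hφ
    obtain ⟨B, hB, hB'⟩ := fdo_fin hφ
    refine ne_top_of_le_ne_top hB (le_trans (lintegral_mono fun w => ?_) hB')
    simp only
    exact le_mul_of_one_le_left zero_le le_self_add
  have hconv : ∀ {φ}, Nice φ → (∀ z, 0 ≤ φ z) →
      IntegrableOn (fun p : ℝ × ℝ => φ (hpt p.1 p.2) / p.2 ^ 2)
        {p : ℝ × ℝ | |p.1| < 1 / 2 ∧ 1 < p.1 ^ 2 + p.2 ^ 2 ∧ 0 < p.2} ∧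
      (∫⁻ w in ModularGroup.fdo, ENNReal.ofReal (φ w)).toReal =
      ∫ p in {p : ℝ × ℝ | |p.1| < 1 / 2 ∧ 1 < p.1 ^ 2 + p.2 ^ 2 ∧ 0 < p.2},
        φ (hpt p.1 p.2) / p.2 ^ 2 := by
    intro φ hφ h0
    have hm : AEStronglyMeasurable (fun p : ℝ × ℝ => φ (hpt p.1 p.2) / p.2 ^ 2)
        (volume.restrict {p : ℝ × ℝ | |p.1| < 1 / 2 ∧ 1 < p.1 ^ 2 + p.2 ^ 2 ∧ 0 < p.2}) := by
      apply ContinuousOn.aestronglyMeasurable _ hF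
      apply ContinuousOn.div
      · exact hφ.cont.comp_continuousOn (continuous_hpt.mono fun p hp => hp.2.2)
      · fun_prop
      · intro p hp
        have := hp.2.2
        positivity
    have hnn : ∀ p : ℝ × ℝ, 0 ≤ φ (hpt p.1 p.2) / p.2 ^ 2 := fun p =>
      div_nonneg (h0 _) (by positivity)
    refine ⟨⟨hm, ?_⟩, ?_⟩
    · rw [hasFiniteIntegral_iff_ofReal (by filter_upwards with p using hnn p), ← fdo_lint φ hφ.cont h0]
      exact (hfin hφ).lt_top
    · rw [fdo_lint φ hφ.cont h0, integral_eq_lintegral_of_nonneg_ae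
        (by filter_upwards with p using hnn p) hm]
  have c1 := hconv hp fun z => le_max_right _ _
  have c2 := hconv hn fun z => le_max_right _ _
  have hmm : ∀ t : ℝ, max t 0 - max (-t) 0 = t := by
    intro t; rcases le_total 0 t with h | h
    · rw [max_eq_left h, max_eq_right (by linarith)]; ring
    · rw [max_eq_right h, max_eq_left (by linarith)]; ring
  rw [c1.2, c2.2, ← mul_sub, ← integral_sub c1.1 c2.1] at h1
  have e1 : ∀ p : ℝ × ℝ, max (g (hpt p.1 p.2)) 0 / p.2 ^ 2 - max (-g (hpt p.1 p.2)) 0 / p.2 ^ 2 =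
    g (hpt p.1 p.2) / p.2 ^ 2 := fun p => by rw [← sub_div, hmm]
  simp_rw [e1] at h1
  refine h1.congr' ?_
  filter_upwards [self_mem_nhdsWithin] with ε hε
  rw [← intervalIntegral.integral_sub ((cont_row hp hε).intervalIntegrable _ _)
    ((cont_row hn hε).intervalIntegrable _ _)]
  simp_rw [hmm]

lemma dist_moeb {a b c d : ℤ} (hdet : a * d - b * c = 1) (hd : 0 < d) {τ : ℝ} (hτ : 0 < τ) (hτ2 : τ ≤ 1/2)
    (hc : |(c : ℝ)| ≤ τ * d) {w : ℝ} (hw0 : 0 ≤ w) (hw1 : w ≤ 1) {ε : ℝ} (hε : 0 < ε) (γ : (Matrix.SpecialLinearGroup (Fin 2) ℤ))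
    (hγ : γ = ⟨!![a, b; c, d], by rw [Matrix.det_fin_two_of]; exact hdet⟩) :
    dist (γ • hpt w (ε * d ^ 2)) (hpt ((a * w + b) / (c * w + d)) ε) ≤ 5 * τ + |(c : ℝ)| * d * ε := by
  have hdR : (0 : ℝ) < d := by exact_mod_cast hd
  have hdetR : (a : ℝ) * d - b * c = 1 := by exact_mod_cast hdet
  set j : ℝ := c * w + d with hj
  have hcw : |(c : ℝ) * w| ≤ τ * d := by
    rw [abs_mul, abs_of_nonneg hw0]
    calc |(c : ℝ)| * w ≤ |(c : ℝ)| * 1 := by gcongr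
      _ ≤ _ := by rw [mul_one]; exact hc
  have hcw' := abs_le.1 hcw
  have hj1 : d * (1 - τ) ≤ j := by rw [hj]; linarith
  have hj0 : 0 < j := lt_of_lt_of_le (by nlinarith) hj1
  have hj2 : d / 2 ≤ j := by nlinarith
  have hP : 0 < ε * (d : ℝ) ^ 2 := by positivity
  set P := hpt w (ε * d ^ 2) with hPd
  set q : ℂ := (c : ℂ) * P + d with hq
  have hcoeP : (P : ℂ) = w + (ε * d ^ 2 : ℝ) * I := by
    rw [hPd, coe_hpt hP]; apply Complex.ext <;>
      simp only [Complex.add_re, Complex.add_im, Complex.re_ofReal_mul, Complex.im_ofReal_mul,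
        Complex.I_re, Complex.I_im, Complex.ofReal_re, Complex.ofReal_im] <;> ring
  have hqe : q = j + (c * (ε * d ^ 2) : ℝ) * I := by
    rw [hq, hcoeP, hj]; push_cast; ring
  have hqn : q ≠ 0 := by
    intro h
    have := congrArg Complex.re h
    rw [hqe] at this
    simp only [Complex.add_re, Complex.re_ofReal_mul, Complex.I_re, Complex.ofReal_re,
      Complex.zero_re, mul_zero, add_zero] at this
    exact hj0.ne' this
  have hjn : (j : ℂ) ≠ 0 := by exact_mod_cast hj0.ne'
  have hcoe : ((γ • P : UpperHalfPlane) : ℂ) = (a * P + b) / q := by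
    rw [UpperHalfPlane.coe_specialLinearGroup_apply, hγ]; simp [hq]
  have him : (γ • P).im = ε * d ^ 2 / ‖q‖ ^ 2 := by
    rw [im_smul_row, hγ, hPd, hpt_im hP, ← hPd]; simp [hq]
  have hQ : 0 < ‖q‖ := norm_pos_iff.2 hqn
  refine (UpperHalfPlane.dist_le_dist_coe_div_sqrt _ _).trans ?_
  rw [him, hpt_im hε, show ε * (d : ℝ) ^ 2 / ‖q‖ ^ 2 * ε = (ε * d / ‖q‖) ^ 2 by ring,
    Real.sqrt_sq (by positivity), hcoe, coe_hpt hε, dist_eq_norm]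
  have e1 : (a * (P : ℂ) + b) / q - (⟨(a * w + b) / j, ε⟩ : ℂ) =
      ε * I * ((d : ℂ) ^ 2 - j * q) / (j * q) := by
    have h2 : (⟨(a * w + b) / j, ε⟩ : ℂ) = (a * w + b) / j + ε * I := by
      apply Complex.ext
      · have : ((a * w + b : ℂ) / j) = (((a * w + b) / j : ℝ) : ℂ) := by push_cast; rfl
        rw [this]; simp
      · have : ((a * w + b : ℂ) / j) = (((a * w + b) / j : ℝ) : ℂ) := by push_cast; rfl
        rw [this]; simp
    rw [h2]
    field_simp
    rw [hqe, hcoeP, hj]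
    have hdetC : (a : ℂ) * d - b * c = 1 := by exact_mod_cast hdet
    push_cast
    linear_combination ((ε : ℂ) * d^2 * I) * hdetC
  rw [e1, norm_div, norm_mul, norm_mul, norm_mul]
  simp only [Complex.norm_I, Complex.norm_real, Real.norm_eq_abs, abs_of_pos hε, abs_of_pos hj0, mul_one]
  have e2 : ε * ‖(d : ℂ) ^ 2 - j * q‖ / (j * ‖q‖) / (ε * d / ‖q‖) = ‖(d : ℂ) ^ 2 - j * q‖ / (j * d) := by
    field_simp
  rw [e2, div_le_iff₀ (by positivity)]
  have e3 : (d : ℂ) ^ 2 - j * q = ((d ^ 2 - j ^ 2 : ℝ) : ℂ) - ((j * (c * (ε * d ^ 2)) : ℝ) : ℂ) * I := by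
    rw [hqe]; push_cast; ring
  rw [e3]
  refine (norm_sub_le _ _).trans ?_
  rw [norm_mul, Complex.norm_I, Complex.norm_real, Complex.norm_real, Real.norm_eq_abs, Real.norm_eq_abs, mul_one]
  have e4 : |j * (c * (ε * (d : ℝ) ^ 2))| = |(c : ℝ)| * d * ε * (j * d) := by
    rw [abs_mul, abs_mul, abs_mul, abs_of_pos hj0, abs_of_pos hε, abs_of_pos (by positivity : (0:ℝ) < (d:ℝ) ^ 2)]
    ring
  rw [e4]
  have e5 : |(d : ℝ) ^ 2 - j ^ 2| ≤ 5 * τ * (j * d) := by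
    rw [show (d : ℝ) ^ 2 - j ^ 2 = (-(c * w)) * (d + j) by rw [hj]; ring, abs_mul, abs_neg,
      abs_of_pos (show (0:ℝ) < d + j by positivity)]
    calc |(c : ℝ) * w| * (d + j) ≤ τ * d * (5 * j) := by
          apply mul_le_mul hcw _ (by positivity) (by positivity)
          linarith
      _ = _ := by ring
  linarith

lemma tail {g} (h : Nice g) {C : ℝ} (hC : Tendsto (fun ε : ℝ => ∫ x in (0:ℝ)..1, g (hpt x ε)) (𝓝[>] 0) (𝓝 C))
    {δ : ℝ} (hδ : 0 < δ) : ∃ τ : ℝ, 0 < τ ∧ τ ≤ 1 / 2 ∧ ∀ a b c d : ℤ, a * d - b * c = 1 → 0 < d →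
    |(c : ℝ)| ≤ τ * d → ∀ᶠ ε in 𝓝[>] (0 : ℝ),
      |∫ x in ((b : ℝ) / d)..((a + b) / (c + d)), (g (hpt x ε) - C)| ≤ δ * (1 / (d * (c + d))) := by
  obtain ⟨M0, hM0, hb0⟩ := h.bdd
  obtain ⟨M, hM, hb⟩ : ∃ M : ℝ, 0 < M ∧ ∀ z, |g z - C| ≤ M :=
    ⟨M0 + |C|, by positivity, fun z => (abs_sub _ _).trans (by linarith [hb0 z])⟩
  set e := δ / 20 with he
  have he0 : 0 < e := by positivity
  obtain ⟨ρ, hρ, hu⟩ := h.unif e he0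
  set τ := min (1 / 2) (min (ρ / 12) (δ / (40 * M))) with hτd
  have hτ : 0 < τ := by positivity
  have hτ1 : τ ≤ 1 / 2 := min_le_left _ _
  have hτ2 : τ ≤ ρ / 12 := (min_le_right _ _).trans (min_le_left _ _)
  have hτ3 : τ * M ≤ δ / 40 := by
    have : τ ≤ δ / (40 * M) := (min_le_right _ _).trans (min_le_right _ _)
    calc τ * M ≤ δ / (40 * M) * M := by gcongr
      _ = δ / 40 := by field_simp
  refine ⟨τ, hτ, hτ1, fun a b c d hdet hd hc => ?_⟩
  have hdR : (0 : ℝ) < d := by exact_mod_cast hd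
  have hdetR : (a : ℝ) * d - b * c = 1 := by exact_mod_cast hdet
  have hlim : Tendsto (fun ε : ℝ => ∫ x in (0:ℝ)..1, g (hpt x (ε * d ^ 2))) (𝓝[>] 0) (𝓝 C) := by
    refine hC.comp (f := fun ε : ℝ => ε * (d : ℝ) ^ 2) ?_
    apply tendsto_nhdsWithin_iff.2 ⟨?_, ?_⟩
    · have : Tendsto (fun ε : ℝ => ε * (d : ℝ) ^ 2) (𝓝 0) (𝓝 (0 * (d : ℝ) ^ 2)) :=
        tendsto_id.mul_const _
      rw [zero_mul] at this
      exact this.mono_left nhdsWithin_le_nhds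
    · filter_upwards [self_mem_nhdsWithin] with ε hε
      have : 0 < ε := hε
      exact mul_pos this (by positivity)
  have hsm : ∀ᶠ ε in 𝓝[>] (0 : ℝ), |(c : ℝ)| * d * ε < τ := by
    have : Tendsto (fun ε : ℝ => |(c : ℝ)| * d * ε) (𝓝 0) (𝓝 (|(c : ℝ)| * d * 0)) :=
      tendsto_id.const_mul _
    rw [mul_zero] at this
    exact (this.mono_left nhdsWithin_le_nhds).eventually (gt_mem_nhds hτ)
  filter_upwards [self_mem_nhdsWithin, hsm, Metric.tendsto_nhds.1 hlim e he0] with ε hε hs hl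
  have hε : 0 < ε := hε
  have hcd : ∀ w ∈ Set.Icc (0 : ℝ) 1, |(c : ℝ) * w| ≤ τ * d := by
    intro w hw
    rw [abs_mul, abs_of_nonneg hw.1]
    calc |(c : ℝ)| * w ≤ |(c : ℝ)| * 1 := by gcongr; exact hw.2
      _ ≤ _ := by rw [mul_one]; exact hc
  have hj : ∀ w ∈ Set.Icc (0 : ℝ) 1, d / 2 ≤ (c : ℝ) * w + d := by
    intro w hw
    have := (abs_le.1 (hcd w hw)).1
    nlinarith
  have hj0 : ∀ w ∈ Set.Icc (0 : ℝ) 1, 0 < (c : ℝ) * w + d := fun w hw =>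
    lt_of_lt_of_le (by positivity) (hj w hw)
  have hG : Continuous fun x => g (hpt x ε) - C := (cont_row h hε).sub continuous_const
  have hP : 0 < ε * (d : ℝ) ^ 2 := by positivity
  have hsub : ∫ w in (0 : ℝ)..1, (g (hpt ((a * w + b) / (c * w + d)) ε) - C) * (1 / (c * w + d) ^ 2) =
      ∫ x in ((b : ℝ) / d)..((a + b) / (c + d)), (g (hpt x ε) - C) := by
    have := intervalIntegral.integral_comp_mul_deriv' (a := 0) (b := 1)
      (f := fun w : ℝ => (a * w + b) / (c * w + d)) (f' := fun w : ℝ => 1 / (c * w + d) ^ 2)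
      (g := fun x => g (hpt x ε) - C) ?_ ?_ hG.continuousOn
    · simp only [Function.comp] at this
      rw [this]; simp
    · intro w hw
      rw [Set.uIcc_of_le zero_le_one] at hw
      have h1 : HasDerivAt (fun w : ℝ => (a : ℝ) * w + b) a w := by
        simpa using ((hasDerivAt_id w).const_mul (a : ℝ)).add_const (b : ℝ)
      have h2 : HasDerivAt (fun w : ℝ => (c : ℝ) * w + d) c w := by
        simpa using ((hasDerivAt_id w).const_mul (c : ℝ)).add_const (d : ℝ)
      have h3 := h1.div h2 (hj0 w hw).ne'
      rw [show (a : ℝ) * (c * w + d) - (a * w + b) * c = 1 by linear_combination hdetR] at h3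
      exact h3
    · intro w hw
      rw [Set.uIcc_of_le zero_le_one] at hw
      have := (hj0 w hw).ne'
      have hc2 : ContinuousAt (fun w : ℝ => (c * w + d : ℝ) ^ 2) w := by fun_prop
      exact (continuousAt_const.div hc2 (pow_ne_zero 2 this)).continuousWithinAt
  rw [← hsub]
  have hcont1 : ContinuousOn (fun w : ℝ => (g (hpt ((a * w + b) / (c * w + d)) ε) - C) * (1 / (c * w + d) ^ 2))
      (Set.uIcc 0 1) := by
    rw [Set.uIcc_of_le zero_le_one]
    have hne : ∀ w ∈ Set.Icc (0 : ℝ) 1, (c : ℝ) * w + d ≠ 0 := fun w hw => (hj0 w hw).ne'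
    apply ContinuousOn.mul
    · exact hG.comp_continuousOn (ContinuousOn.div (by fun_prop) (by fun_prop) hne)
    · exact ContinuousOn.div (by fun_prop) (by fun_prop) (fun w hw => pow_ne_zero 2 (hne w hw))
  have hcont2 : Continuous (fun w : ℝ => (g (hpt w (ε * d ^ 2)) - C) * (1 / (d : ℝ) ^ 2)) :=
    ((cont_row h hP).sub continuous_const).mul continuous_const
  have hdiff : |(∫ w in (0 : ℝ)..1, (g (hpt ((a * w + b) / (c * w + d)) ε) - C) * (1 / (c * w + d) ^ 2)) -
      ∫ w in (0 : ℝ)..1, (g (hpt w (ε * d ^ 2)) - C) * (1 / (d : ℝ) ^ 2)| ≤ (4 * e + 10 * (τ * M)) / d ^ 2 := by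
    rw [← intervalIntegral.integral_sub (hcont1.intervalIntegrable) (hcont2.intervalIntegrable _ _)]
    have := intervalIntegral.norm_integral_le_of_norm_le_const (a := (0 : ℝ)) (b := 1)
      (C := (4 * e + 10 * (τ * M)) / d ^ 2) (f := fun w : ℝ =>
      (g (hpt ((a * w + b) / (c * w + d)) ε) - C) * (1 / (c * w + d) ^ 2) -
      (g (hpt w (ε * d ^ 2)) - C) * (1 / (d : ℝ) ^ 2)) ?_
    · simpa using this
    intro w hw
    rw [Set.uIoc_of_le zero_le_one] at hw
    have hw' : w ∈ Set.Icc (0 : ℝ) 1 := ⟨hw.1.le, hw.2⟩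
    obtain ⟨γ, hγ⟩ : ∃ γ : (Matrix.SpecialLinearGroup (Fin 2) ℤ), γ = ⟨!![a, b; c, d], by rw [Matrix.det_fin_two_of]; exact hdet⟩ := ⟨_, rfl⟩
    have hdm := dist_moeb hdet hd hτ hτ1 hc hw'.1 hw'.2 hε γ hγ
    have hg := hu _ _ (show dist _ _ < ρ by linarith)
    rw [h.inv] at hg
    have hjw := hj w hw'
    have hjp := hj0 w hw'
    have hcw := hcd w hw'
    set j := (c : ℝ) * w + d with hjd
    set u := g (hpt w (ε * d ^ 2)) with hud
    set v := g (hpt ((a * w + b) / j) ε) with hvd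
    have hubd : |u - C| ≤ M := hb _
    rw [Real.norm_eq_abs, show (v - C) * (1 / j ^ 2) - (u - C) * (1 / (d : ℝ) ^ 2) =
      (v - u) * (1 / j ^ 2) + (u - C) * (1 / j ^ 2 - 1 / d ^ 2) by ring]
    have i1 : |(v - u) * (1 / j ^ 2)| ≤ e * (4 / d ^ 2) := by
      rw [abs_mul, abs_sub_comm, abs_of_pos (show 0 < 1 / j ^ 2 by positivity)]
      apply mul_le_mul hg.le _ (by positivity) he0.le
      rw [div_le_div_iff₀ (by positivity) (by positivity)]
      nlinarith
    have i2 : |1 / j ^ 2 - 1 / (d : ℝ) ^ 2| ≤ 10 * τ / d ^ 2 := by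
      have e1 : 1 / j ^ 2 - 1 / (d : ℝ) ^ 2 = (-(c * w) * (d + j)) / (j ^ 2 * d ^ 2) := by
        have : (c : ℝ) * w = j - d := by rw [hjd]; ring
        rw [this]; field_simp; ring
      rw [e1, abs_div, abs_mul, abs_neg, abs_of_pos (show 0 < d + j by positivity),
        abs_of_pos (show 0 < j ^ 2 * (d : ℝ) ^ 2 by positivity),
        div_le_div_iff₀ (by positivity) (by positivity)]
      have hj3 : j ≤ 3 / 2 * d := by
        have := (abs_le.1 hcw).2
        rw [hjd]; nlinarith
      have : |(c : ℝ) * w| * (d + j) ≤ 10 * τ * j ^ 2 := by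
        calc |(c : ℝ) * w| * (d + j) ≤ τ * d * (d + j) := by gcongr
          _ = τ * (d * (d + j)) := by ring
          _ ≤ τ * (10 * j ^ 2) := by
            apply mul_le_mul_of_nonneg_left _ hτ.le
            nlinarith
          _ = _ := by ring
      calc |(c : ℝ) * w| * (d + j) * d ^ 2 ≤ 10 * τ * j ^ 2 * d ^ 2 := by gcongr
        _ = _ := by ring
    have i3 : |(u - C) * (1 / j ^ 2 - 1 / (d : ℝ) ^ 2)| ≤ M * (10 * τ / d ^ 2) := by
      rw [abs_mul]; gcongr
    refine (abs_add_le _ _).trans ((add_le_add i1 i3).trans (le_of_eq ?_))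
    field_simp
  have hmain : |∫ w in (0 : ℝ)..1, (g (hpt w (ε * d ^ 2)) - C) * (1 / (d : ℝ) ^ 2)| ≤ e / d ^ 2 := by
    rw [intervalIntegral.integral_mul_const, intervalIntegral.integral_sub
      ((cont_row h hP).intervalIntegrable _ _) (continuous_const.intervalIntegrable _ _)]
    rw [Real.dist_eq] at hl
    simp only [intervalIntegral.integral_const, sub_zero, one_smul]
    rw [abs_mul, abs_of_pos (show 0 < 1 / (d : ℝ) ^ 2 by positivity), mul_one_div]
    gcongr
  have hcd2 : (c : ℝ) + d ≤ 2 * d := by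
    have := (abs_le.1 hc).2
    nlinarith
  have hcd0 : (0 : ℝ) < c + d := by
    have := hj0 1 (by simp); simpa using this
  have hfin : (4 * e + 10 * (τ * M)) / d ^ 2 + e / d ^ 2 ≤ δ * (1 / (d * (c + d))) := by
    calc _ = (5 * e + 10 * (τ * M)) / (d : ℝ) ^ 2 := by ring
      _ ≤ (δ / 2) / (d : ℝ) ^ 2 := by gcongr; rw [he]; linarith
      _ = δ * (1 / (d * (2 * d))) := by field_simp
      _ ≤ _ := by gcongr
  have := abs_sub_abs_le_abs_sub (∫ w in (0 : ℝ)..1, (g (hpt ((a * w + b) / (c * w + d)) ε) - C) * (1 / (c * w + d) ^ 2)) 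
     (∫ w in (0 : ℝ)..1, (g (hpt w (ε * d ^ 2)) - C) * (1 / (d : ℝ) ^ 2))
  linarith

def TailC (Φ : ℝ → ℝ → ℝ) (δ τ : ℝ) : Prop := ∀ a b c d : ℤ, a * d - b * c = 1 → 0 < d →
    |(c : ℝ)| ≤ τ * d → ∀ᶠ ε in 𝓝[>] (0 : ℝ),
      |Φ ε ((a + b) / (c + d)) - Φ ε ((b : ℝ) / d)| ≤ δ * (1 / (d * (c + d)))

def LipC (Φ : ℝ → ℝ → ℝ) (M : ℝ) : Prop := ∀ ε > 0, ∀ s t, |Φ ε t - Φ ε s| ≤ M * |t - s|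

def PP (Φ : ℝ → ℝ → ℝ) (β : ℝ) : Prop := ∀ a b c d : ℤ, a * d - b * c = 1 → 1 ≤ c → 1 ≤ d →
  ∀ᶠ ε in 𝓝[>] (0 : ℝ), |Φ ε ((a : ℝ) / c) - Φ ε ((b : ℝ) / d)| ≤ β * (1 / (c * d))

def mirr (Φ : ℝ → ℝ → ℝ) : ℝ → ℝ → ℝ := fun ε t => - Φ ε (-t)

lemma mirr_lip {Φ M} (h : LipC Φ M) : LipC (mirr Φ) M := by
  intro ε hε s t
  have := h ε hε (-t) (-s)
  unfold mirr
  rw [show -Φ ε (-t) - -Φ ε (-s) = Φ ε (-s) - Φ ε (-t) by ring, show t - s = -s - -t by ring]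
  exact this

lemma mirr_PP {Φ β} (h : PP Φ β) : PP (mirr Φ) β := by
  intro a b c d hdet hc hd
  filter_upwards [h (-b) (-a) d c (by linarith) hd hc] with ε hε
  unfold mirr
  rw [show -Φ ε (-(a / c : ℝ)) - -Φ ε (-(b / d : ℝ)) =
    Φ ε ((-b : ℤ) / d : ℝ) - Φ ε ((-a : ℤ) / c : ℝ) by push_cast; rw [neg_div, neg_div]; ring,
    mul_comm (c : ℝ)]
  exact hε

lemma mirr_mirr (Φ) : mirr (mirr Φ) = Φ := by
  ext ε t; simp [mirr]

lemma mirr_tail {Φ δ τ} (hτ : 0 < τ) (hτ1 : τ ≤ 1 / 2) (h : TailC Φ δ τ) : TailC (mirr Φ) δ (τ / 2) := by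
  intro a b c d hdet hd hc
  have hdR : (0 : ℝ) < d := by exact_mod_cast hd
  have hc' := abs_le.1 hc
  have hcd : (d : ℝ) / 2 ≤ c + d := by nlinarith [hc'.1]
  have hcd0 : (0 : ℝ) < c + d := by linarith
  have hcdi : 0 < c + d := by exact_mod_cast hcd0
  filter_upwards [h a (-(a + b)) (-c) (c + d) (by linarith) hcdi (by
    push_cast; rw [abs_neg]; refine hc.trans ?_; nlinarith)] with ε hε
  unfold mirr
  push_cast at hε
  rw [show (a + (-(a + b)) : ℝ) = -b by ring, show (-c + (c + d) : ℝ) = d by ring] at hε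
  rw [show -Φ ε (-((a + b) / (c + d) : ℝ)) - -Φ ε (-(b / d : ℝ)) =
    Φ ε (-b / d) - Φ ε (-(a + b) / (c + d) : ℝ) by rw [neg_div, neg_div]; ring, mul_comm (d : ℝ)]
  exact hε

lemma step_right {Φ M β δ τ} {K : ℕ} (hM : 0 < M) (hL : LipC Φ M) (hP : PP Φ β) (hδ : 0 < δ) (hτ : 0 < τ)
    (hT : TailC Φ δ τ) (hK : 1 ≤ τ * K) (hβ : 2 * δ ≤ β) {a b c d : ℤ} (hdet : a * d - b * c = 1)
    (hc : 1 ≤ c) (hcd : c ≤ d) :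
    ∀ᶠ ε in 𝓝[>] (0 : ℝ), |Φ ε ((a : ℝ) / c) - Φ ε ((b : ℝ) / d)| ≤
      (β - (β - 2 * δ) / (K + 1)) * (1 / (c * d)) := by
  have hd : 1 ≤ d := hc.trans hcd
  have hcR : (1 : ℝ) ≤ c := by exact_mod_cast hc
  have hdR : (1 : ℝ) ≤ d := by exact_mod_cast hd
  have hcdR : (c : ℝ) ≤ d := by exact_mod_cast hcd
  have hdetR : (a : ℝ) * d - b * c = 1 := by exact_mod_cast hdet
  set x : ℕ → ℝ := fun n => (a * n + b) / (c * n + d) with hx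
  set u : ℕ → ℝ := fun n => 1 / (c * (c * n + d)) with hu
  have hpos : ∀ n : ℕ, (0 : ℝ) < c * n + d := fun n => by positivity
  have hdu : ∀ n : ℕ, u n - u (n + 1) = 1 / ((c * n + d) * (c * (n + 1 : ℕ) + d)) := by
    intro n
    have h1 := (hpos n).ne'
    have h2 := (hpos (n + 1)).ne'
    have h3 : (c : ℝ) ≠ 0 := by positivity
    simp only [hu]
    field_simp
    push_cast
    ring
  have h1 : ∀ n : ℕ, ∀ᶠ ε in 𝓝[>] (0 : ℝ), |Φ ε (x n) - Φ ε (x 0)| ≤ β * (u 0 - u n) := by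
    intro n
    induction n with
    | zero => filter_upwards with ε; simp
    | succ n ih =>
      have hn : (0 : ℤ) ≤ c * n := by positivity
      filter_upwards [ih, hP (a * (n + 1) + b) (a * n + b) (c * (n + 1) + d) (c * n + d)
        (by linear_combination hdet) (by nlinarith) (by nlinarith)] with ε e1 e2
      push_cast at e2
      have e3 : x (n + 1) = (a * (n + 1) + b) / (c * (n + 1) + d) := by simp [hx]
      have e4 := hdu n
      rw [← e3, mul_comm (c * ((n : ℝ) + 1) + d)] at e2
      push_cast at e4
      rw [← e4] at e2
      have := abs_add_le (Φ ε (x (n + 1)) - Φ ε (x n)) (Φ ε (x n) - Φ ε (x 0))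
      rw [sub_add_sub_cancel] at this
      linarith
  have h2 : ∀ n : ℕ, K ≤ n → ∀ᶠ ε in 𝓝[>] (0 : ℝ), |Φ ε (x n) - Φ ε (x K)| ≤ δ * (u K - u n) := by
    intro n hn
    induction n, hn using Nat.le_induction with
    | base => filter_upwards with ε; simp
    | succ n hn ih =>
      have hn0 : (0 : ℤ) ≤ c * n := by positivity
      have hKn : (K : ℝ) ≤ n := by exact_mod_cast hn
      filter_upwards [ih, hT a (a * n + b) c (c * n + d)
        (by linear_combination hdet) (by nlinarith) (by
          push_cast
          rw [abs_of_pos (by positivity)]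
          calc (c : ℝ) ≤ c * (τ * K) := by nlinarith
            _ ≤ c * (τ * n) := by gcongr
            _ ≤ τ * (c * n + d) := by nlinarith)] with ε e1 e2
      push_cast at e2
      have e3 : x (n + 1) = (a + (a * n + b)) / (c + (c * n + d)) := by
        simp only [hx]; push_cast; congr 1 <;> ring
      have e4 := hdu n
      rw [← e3] at e2
      push_cast at e4
      rw [show (c : ℝ) * (n + 1) + d = c + (c * n + d) by ring] at e4
      rw [← e4] at e2
      have := abs_add_le (Φ ε (x (n + 1)) - Φ ε (x n)) (Φ ε (x n) - Φ ε (x K))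
      rw [sub_add_sub_cancel] at this
      linarith
  have huK : 0 < u K := by have := hpos K; simp only [hu]; positivity
  obtain ⟨N, hKN, hN⟩ : ∃ N : ℕ, K ≤ N ∧ M * u N ≤ δ * u K := by
    obtain ⟨N0, hN0⟩ := exists_nat_gt (M / (δ * u K))
    refine ⟨max K N0, le_max_left _ _, ?_⟩
    rw [div_lt_iff₀ (by positivity)] at hN0
    simp only [hu]
    rw [mul_one_div, div_le_iff₀ (by have := hpos (max K N0); positivity)]
    have : (N0 : ℝ) ≤ c * (c * (max K N0 : ℕ) + d) := by
      have h5 : (N0 : ℝ) ≤ (max K N0 : ℕ) := by exact_mod_cast le_max_right _ _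
      have h6 : (0 : ℝ) ≤ (max K N0 : ℕ) := by positivity
      have h7 : ((max K N0 : ℕ) : ℝ) ≤ c * (max K N0 : ℕ) := le_mul_of_one_le_left h6 hcR
      have h8 : (0 : ℝ) ≤ c * (max K N0 : ℕ) + d := by linarith
      have h9 := le_mul_of_one_le_left h8 hcR
      linarith
    calc M ≤ N0 * (δ * u K) := hN0.le
      _ ≤ (c * (c * (max K N0 : ℕ) + d)) * (δ * u K) := by gcongr
      _ = _ := by simp only [hu]; ring
  filter_upwards [h1 K, h2 N hKN, self_mem_nhdsWithin] with ε e1 e2 hε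
  have e3 := hL ε hε (x N) (a / c)
  have hcx : (a : ℝ) / c - x N = u N := by
    have h1 := (hpos N).ne'
    have h3 : (c : ℝ) ≠ 0 := by positivity
    simp only [hu, hx]
    field_simp
    linear_combination hdetR
  have huN : 0 < u N := by have := hpos N; simp only [hu]; positivity
  rw [hcx, abs_of_pos huN] at e3
  have hx0 : x 0 = b / d := by simp [hx]
  have hu0 : u 0 = 1 / (c * d) := by simp [hu]
  rw [← hx0, ← hu0]
  have e5 : |Φ ε (a / c) - Φ ε (x 0)| ≤ β * (u 0 - u K) + δ * u K + M * u N := by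
    have a1 := abs_add_le (Φ ε (a / c) - Φ ε (x N)) (Φ ε (x N) - Φ ε (x 0))
    have a2 := abs_add_le (Φ ε (x N) - Φ ε (x K)) (Φ ε (x K) - Φ ε (x 0))
    rw [sub_add_sub_cancel] at a1 a2
    nlinarith
  have huK2 : u 0 / (K + 1) ≤ u K := by
    rw [hu0]
    simp only [hu]
    rw [div_div]
    apply one_div_le_one_div_of_le (by have := hpos K; positivity)
    rw [mul_assoc]
    gcongr
    nlinarith
  calc _ ≤ β * (u 0 - u K) + δ * u K + M * u N := e5
    _ ≤ β * u 0 - (β - 2 * δ) * u K := by linarith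
    _ ≤ β * u 0 - (β - 2 * δ) * (u 0 / (K + 1)) := by
      have : 0 ≤ β - 2 * δ := by linarith
      gcongr
    _ = _ := by ring

lemma step_PP {Φ M β δ τ} {K : ℕ} (hM : 0 < M) (hL : LipC Φ M) (hP : PP Φ β) (hδ : 0 < δ) (hτ : 0 < τ)
    (hT : TailC Φ δ τ) (hT' : TailC (mirr Φ) δ τ) (hK : 1 ≤ τ * K) (hβ : 2 * δ ≤ β) :
    PP Φ (β - (β - 2 * δ) / (K + 1)) := by
  intro a b c d hdet hc hd
  rcases le_total c d with h | h
  · exact step_right hM hL hP hδ hτ hT hK hβ hdet hc h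
  · have := step_right hM (mirr_lip hL) (mirr_PP hP) hδ hτ hT' hK hβ
      (a := -b) (b := -a) (c := d) (d := c) (by linarith) hd h
    filter_upwards [this] with ε hε
    unfold mirr at hε
    push_cast at hε
    rw [neg_div, neg_div, neg_neg, neg_neg] at hε
    rw [mul_comm (c : ℝ), show Φ ε (a / c) - Φ ε (b / d) = -Φ ε (b / d) - -Φ ε (a / c) by ring]
    exact hε

lemma farey_diff {a b c d : ℤ} (hdet : a * d - b * c = 1) (hc : 1 ≤ c) (hd : 1 ≤ d) :
    (a : ℝ) / c - b / d = 1 / (c * d) := by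
  have hcR : (1 : ℝ) ≤ c := by exact_mod_cast hc
  have hdR : (1 : ℝ) ≤ d := by exact_mod_cast hd
  have hdetR : (a : ℝ) * d - b * c = 1 := by exact_mod_cast hdet
  have h1 : (c : ℝ) ≠ 0 := by positivity
  have h2 : (d : ℝ) ≠ 0 := by positivity
  field_simp
  linear_combination hdetR

lemma all_PP {Φ M} (hM : 0 < M) (hL : LipC Φ M)
    (hT : ∀ δ > 0, ∃ τ, 0 < τ ∧ τ ≤ 1 / 2 ∧ TailC Φ δ τ) : ∀ β > 0, PP Φ β := by
  intro β0 hβ0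
  set δ := β0 / 3 with hδd
  have hδ : 0 < δ := by positivity
  obtain ⟨τ, hτ, hτ1, hT⟩ := hT δ hδ
  have hT1 := mirr_tail hτ hτ1 hT
  have hT2 : TailC Φ δ (τ / 2) := by
    intro a b c d hdet hd hc
    refine hT a b c d hdet hd (hc.trans ?_)
    have hdR : (0 : ℝ) < d := by exact_mod_cast hd
    nlinarith
  obtain ⟨K, hK⟩ := exists_nat_ge (2 / τ)
  have hK1 : 1 ≤ τ / 2 * K := by
    rw [div_le_iff₀ hτ] at hK; linarith
  set B := M + 2 * δ with hB
  set r : ℝ := 1 - 1 / (K + 1) with hr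
  have hr0 : 0 ≤ r := by
    rw [hr, sub_nonneg, div_le_one (by positivity)]; linarith [(Nat.cast_nonneg K : (0:ℝ) ≤ K)]
  have hr1 : r < 1 := by
    have : (0 : ℝ) < 1 / (K + 1) := by positivity
    rw [hr]; linarith
  have hit : ∀ n : ℕ, PP Φ (2 * δ + M * r ^ n) := by
    intro n
    induction n with
    | zero =>
      intro a b c d hdet hc hd
      filter_upwards [self_mem_nhdsWithin] with ε hε
      have := hL ε hε (b / d) (a / c)
      have hcR : (1 : ℝ) ≤ c := by exact_mod_cast hc
      have hdR : (1 : ℝ) ≤ d := by exact_mod_cast hd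
      have hp : (0 : ℝ) < 1 / (c * d) := by positivity
      rw [farey_diff hdet hc hd, abs_of_pos hp] at this
      rw [pow_zero, mul_one]
      refine this.trans ?_
      gcongr
      linarith
    | succ n ih =>
      have := step_PP hM hL ih hδ (by positivity) hT2 hT1 hK1 (by
        have : 0 ≤ M * r ^ n := by positivity
        linarith)
      convert this using 1
      rw [hr]; ring
  have hlim : Tendsto (fun n : ℕ => M * r ^ n) atTop (𝓝 (M * 0)) :=
    (tendsto_pow_atTop_nhds_zero_of_lt_one hr0 hr1).const_mul M
  rw [mul_zero] at hlim
  obtain ⟨n, hn⟩ := (hlim.eventually (gt_mem_nhds hδ)).exists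
  intro a b c d hdet hc hd
  filter_upwards [hit n a b c d hdet hc hd] with ε hε
  refine hε.trans ?_
  have hcR : (1 : ℝ) ≤ c := by exact_mod_cast hc
  have hdR : (1 : ℝ) ≤ d := by exact_mod_cast hd
  gcongr
  linarith

lemma all_t {Φ M} (hM : 0 < M) (hL : LipC Φ M) (hP : ∀ β > 0, PP Φ β) (N : ℕ) :
    ∀ a b c d : ℤ, a * d - b * c = 1 → 1 ≤ c → 1 ≤ d → ∀ δ > 0, ∀ t : ℝ, (b : ℝ) / d ≤ t → t ≤ a / c →
    ∀ᶠ ε in 𝓝[>] (0 : ℝ), |Φ ε t - Φ ε (b / d)| ≤ δ + M / (c + d - 1 + N) := by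
  induction N with
  | zero =>
    intro a b c d hdet hc hd δ hδ t ht1 ht2
    filter_upwards [self_mem_nhdsWithin] with ε hε
    have h1 := hL ε hε (b / d) t
    have h2 := farey_diff hdet hc hd
    have hcR : (1 : ℝ) ≤ c := by exact_mod_cast hc
    have hdR : (1 : ℝ) ≤ d := by exact_mod_cast hd
    rw [abs_of_nonneg (show (0 : ℝ) ≤ t - b / d by linarith)] at h1
    have h3 : t - b / d ≤ 1 / (c * d) := by linarith
    have h4 : (1 : ℝ) / (c * d) ≤ 1 / (c + d - 1) := by
      apply one_div_le_one_div_of_le (by linarith)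
      nlinarith
    have : M * (t - b / d) ≤ M * (1 / (c + d - 1)) := by
      apply mul_le_mul_of_nonneg_left (h3.trans h4) hM.le
    rw [mul_one_div] at this
    simp only [Nat.cast_zero, add_zero]
    linarith
  | succ N ih =>
    intro a b c d hdet hc hd δ hδ t ht1 ht2
    have hcR : (1 : ℝ) ≤ c := by exact_mod_cast hc
    have hdR : (1 : ℝ) ≤ d := by exact_mod_cast hd
    have hmono : ∀ s : ℝ, c + d + 1 ≤ s → M / (s - 1 + N) ≤ M / (c + d - 1 + (N + 1 : ℕ)) := by
      intro s hs
      have : (0 : ℝ) < c + d - 1 + (N + 1 : ℕ) := by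
        have : (0 : ℝ) ≤ (N + 1 : ℕ) := by positivity
        linarith
      apply div_le_div_of_nonneg_left hM.le this
      push_cast
      linarith
    rcases le_total t (((a + b : ℤ) : ℝ) / ((c + d : ℤ) : ℝ)) with h | h
    · filter_upwards [ih (a + b) b (c + d) d (by linarith) (by linarith) hd δ hδ t ht1 h] with ε hε
      refine hε.trans ?_
      have := hmono ((c + d : ℤ) + d) (by push_cast; linarith)
      linarith
    · have hcd : (1 : ℝ) ≤ 1 * (((c + d : ℤ) : ℝ) * d) := by push_cast; nlinarith
      filter_upwards [ih a (a + b) c (c + d) (by linarith) hc (by linarith) (δ / 2) (by positivity) t h ht2,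
        hP (δ / 2) (by positivity) (a + b) b (c + d) d (by linarith) (by linarith) hd] with ε e1 e2
      have := hmono (c + (c + d : ℤ)) (by push_cast; linarith)
      have e3 : δ / 2 * (1 / (((c + d : ℤ) : ℝ) * d)) ≤ δ / 2 := by
        apply mul_le_of_le_one_right (by positivity)
        rw [div_le_one (by linarith)]
        linarith
      have a1 := abs_add_le (Φ ε t - Φ ε (((a + b : ℤ) : ℝ) / ((c + d : ℤ) : ℝ)))
        (Φ ε (((a + b : ℤ) : ℝ) / ((c + d : ℤ) : ℝ)) - Φ ε (b / d))
      rw [sub_add_sub_cancel] at a1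
      linarith

lemma Phi_tendsto {Φ M} (hM : 0 < M) (hL : LipC Φ M)
    (hT : ∀ δ > 0, ∃ τ, 0 < τ ∧ τ ≤ 1 / 2 ∧ TailC Φ δ τ) {t : ℝ} (h0 : 0 ≤ t) (h1 : t ≤ 1) :
    Tendsto (fun ε => Φ ε t - Φ ε 0) (𝓝[>] 0) (𝓝 0) := by
  rw [Metric.tendsto_nhds]
  intro e he
  obtain ⟨N, hN⟩ := exists_nat_gt (M / (e / 2))
  rw [div_lt_iff₀ (by positivity)] at hN
  filter_upwards [all_t hM hL (all_PP hM hL hT) N 1 0 1 1 (by norm_num) le_rfl le_rfl (e / 3) (by positivity)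
    t (by simpa using h0) (by simpa using h1)] with ε hε
  rw [Real.dist_eq, sub_zero]
  norm_num at hε
  refine hε.trans_lt ?_
  have : M / (1 + N) ≤ e / 2 := by
    rw [div_le_iff₀ (by positivity)]
    nlinarith
  linarith

lemma Phi_main {g} (h : Nice g) {C : ℝ}
    (hC : Tendsto (fun ε : ℝ => ∫ x in (0:ℝ)..1, g (hpt x ε)) (𝓝[>] 0) (𝓝 C)) {t : ℝ} (h0 : 0 ≤ t) (h1 : t ≤ 1) :
    Tendsto (fun ε : ℝ => ∫ x in (0:ℝ)..t, (g (hpt x ε) - C)) (𝓝[>] 0) (𝓝 0) := by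
  obtain ⟨M0, hM0, hb0⟩ := h.bdd
  obtain ⟨M, hM, hb⟩ : ∃ M : ℝ, 0 < M ∧ ∀ z, |g z - C| ≤ M :=
    ⟨M0 + |C|, by positivity, fun z => (abs_sub _ _).trans (by linarith [hb0 z])⟩
  have hG : ∀ ε : ℝ, 0 < ε → ∀ s t : ℝ, IntervalIntegrable (fun x => g (hpt x ε) - C) volume s t :=
    fun ε hε s t => ((cont_row h hε).sub continuous_const).intervalIntegrable _ _
  have hd : ∀ ε : ℝ, 0 < ε → ∀ s t : ℝ, (∫ x in (0:ℝ)..t, (g (hpt x ε) - C)) - (∫ x in (0:ℝ)..s, (g (hpt x ε) - C)) =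
      ∫ x in s..t, (g (hpt x ε) - C) := fun ε hε s t =>
    intervalIntegral.integral_interval_sub_left (hG ε hε _ _) (hG ε hε _ _)
  have := Phi_tendsto (Φ := fun ε t => ∫ x in (0:ℝ)..t, (g (hpt x ε) - C)) hM ?_ ?_ h0 h1
  · simpa using this
  · intro ε hε s t
    simp only
    rw [hd ε hε, ← Real.norm_eq_abs]
    exact intervalIntegral.norm_integral_le_of_norm_le_const fun x _ => hb _
  · intro δ hδ
    obtain ⟨τ, hτ, hτ1, hT⟩ := tail h hC hδ
    refine ⟨τ, hτ, hτ1, fun a b c d hdet hd0 hc => ?_⟩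
    filter_upwards [hT a b c d hdet hd0 hc, self_mem_nhdsWithin] with ε e1 hε
    rw [hd ε hε]
    exact e1

lemma set_main {G : ℝ → ℝ → ℝ} {M : ℝ} (hcont : ∀ ε > 0, Continuous (G ε)) (hb : ∀ ε x, |G ε x| ≤ M)
    (hlim : ∀ t : ℝ, 0 ≤ t → t ≤ 1 → Tendsto (fun ε : ℝ => ∫ x in (0:ℝ)..t, G ε x) (𝓝[>] 0) (𝓝 0))
    (s : Set ℝ) (hs : MeasurableSet s) :
    Tendsto (fun ε : ℝ => ∫ x in s, G ε x ∂(volume.restrict (Set.Ioc 0 1))) (𝓝[>] 0) (𝓝 0) := by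
  have hint : ∀ ε > 0, Integrable (G ε) (volume.restrict (Set.Ioc 0 1)) :=
    fun ε hε => (hcont ε hε).integrableOn_Ioc
  have huniv : Tendsto (fun ε : ℝ => ∫ x, G ε x ∂(volume.restrict (Set.Ioc 0 1))) (𝓝[>] 0) (𝓝 0) := by
    refine (hlim 1 zero_le_one le_rfl).congr fun ε => ?_
    rw [intervalIntegral.integral_of_le zero_le_one]
  have hm0 : (inferInstance : MeasurableSpace ℝ) = MeasurableSpace.generateFrom (Set.range Set.Iic) := by
    rw [← borel_eq_generateFrom_Iic]; exact BorelSpace.measurable_eq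
  induction s, hs using MeasurableSpace.induction_on_inter hm0 isPiSystem_Iic with
  | empty => simp
  | basic t ht =>
    obtain ⟨t, rfl⟩ := ht
    rcases lt_or_ge t 0 with h | h
    · have : Set.Iic t ∩ Set.Ioc (0 : ℝ) 1 = ∅ := by
        ext x; simp; intro h1 h2; linarith
      simp [Measure.restrict_restrict measurableSet_Iic, this]
    · refine (hlim (min t 1) (by positivity) (min_le_right _ _)).congr fun ε => ?_
      rw [intervalIntegral.integral_of_le (by positivity), Measure.restrict_restrict measurableSet_Iic]
      congr 2
      ext x; simp; tauto
  | compl t ht ih =>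
    have := huniv.sub ih
    rw [sub_zero] at this
    refine this.congr' ?_
    filter_upwards [self_mem_nhdsWithin] with ε hε
    rw [setIntegral_compl ht (hint ε hε)]
  | iUnion f hd hm ih =>
    have hsum : Summable fun n => M * (volume.restrict (Set.Ioc (0:ℝ) 1)).real (f n) := by
      apply Summable.mul_left
      exact ENNReal.summable_toReal (by
        rw [← measure_iUnion hd hm]; exact measure_ne_top _ _)
    have := tendsto_tsum_of_dominated_convergence (𝓕 := 𝓝[>] (0 : ℝ)) (g := fun _ => (0 : ℝ))
      (f := fun ε n => ∫ x in f n, G ε x ∂(volume.restrict (Set.Ioc 0 1))) hsum ih (by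
        filter_upwards with ε n
        exact norm_setIntegral_le_of_norm_le_const (measure_lt_top _ _) fun x _ => hb ε x)
    rw [tsum_zero] at this
    refine this.congr' ?_
    filter_upwards [self_mem_nhdsWithin] with ε hε
    rw [integral_iUnion hm hd (hint ε hε).integrableOn]

lemma L1_main {G : ℝ → ℝ → ℝ} {M : ℝ} (hM : 0 < M) (hcont : ∀ ε > 0, Continuous (G ε)) (hb : ∀ ε x, |G ε x| ≤ M)
    (hlim : ∀ t : ℝ, 0 ≤ t → t ≤ 1 → Tendsto (fun ε : ℝ => ∫ x in (0:ℝ)..t, G ε x) (𝓝[>] 0) (𝓝 0))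
    (φ : ℝ → ℝ) (hφ : Integrable φ (volume.restrict (Set.Ioc 0 1))) :
    Tendsto (fun ε : ℝ => ∫ x, φ x * G ε x ∂(volume.restrict (Set.Ioc 0 1))) (𝓝[>] 0) (𝓝 0) := by
  have hI : ∀ ε > 0, ∀ φ : ℝ → ℝ, Integrable φ (volume.restrict (Set.Ioc 0 1)) →
      Integrable (fun x => φ x * G ε x) (volume.restrict (Set.Ioc 0 1)) := by
    intro ε hε φ hφ
    exact hφ.mul_bdd (c := M) (hcont ε hε).aestronglyMeasurable (by filter_upwards with x using hb ε x)
  refine Integrable.induction (μ := volume.restrict (Set.Ioc (0 : ℝ) 1)) (fun φ : ℝ → ℝ =>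
    Tendsto (fun ε : ℝ => ∫ x, φ x * G ε x ∂(volume.restrict (Set.Ioc 0 1))) (𝓝[>] 0) (𝓝 0))
    ?_ ?_ ?_ ?_ hφ
  · intro c s hs _
    have := (set_main hcont hb hlim s hs).const_mul c
    rw [mul_zero] at this
    refine this.congr fun ε => ?_
    rw [← integral_const_mul, ← integral_indicator hs]
    congr 1; ext x
    by_cases hx : x ∈ s <;> simp [hx]
  · intro f g hd hf hg ihf ihg
    have := ihf.add ihg
    rw [add_zero] at this
    refine this.congr' ?_
    filter_upwards [self_mem_nhdsWithin] with ε hε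
    rw [← integral_add (hI ε hε _ hf) (hI ε hε _ hg)]
    congr 1; ext x
    simp [add_mul]
  · apply isClosed_of_closure_subset
    intro f hf
    rw [Metric.mem_closure_iff] at hf
    rw [Set.mem_ofPred_eq, Metric.tendsto_nhds]
    intro e he
    obtain ⟨f', hf', hd⟩ := hf (e / (2 * M)) (by positivity)
    rw [Set.mem_ofPred_eq, Metric.tendsto_nhds] at hf'
    filter_upwards [hf' (e / 2) (by positivity), self_mem_nhdsWithin] with ε h1 hε
    rw [Real.dist_eq, sub_zero] at h1 ⊢
    have i1 := hI ε hε _ (L1.integrable_coeFn f)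
    have i2 := hI ε hε _ (L1.integrable_coeFn f')
    have h2 : |(∫ x, f x * G ε x ∂(volume.restrict (Set.Ioc 0 1))) -
        ∫ x, f' x * G ε x ∂(volume.restrict (Set.Ioc 0 1))| ≤ M * dist f f' := by
      rw [← integral_sub i1 i2, ← Real.norm_eq_abs, L1.dist_eq_integral_dist, ← integral_const_mul]
      refine norm_integral_le_of_norm_le (((L1.integrable_coeFn f).sub (L1.integrable_coeFn f')).norm.const_mul M) ?_
      filter_upwards with x
      rw [← sub_mul, norm_mul, mul_comm]
      exact mul_le_mul_of_nonneg_right (hb ε x) (norm_nonneg _)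
    have h3 : M * dist f f' < e / 2 := by
      calc M * dist f f' < M * (e / (2 * M)) := by gcongr
        _ = e / 2 := by field_simp
    have := abs_sub_abs_le_abs_sub (∫ x, f x * G ε x ∂(volume.restrict (Set.Ioc 0 1)))
      (∫ x, f' x * G ε x ∂(volume.restrict (Set.Ioc 0 1)))
    linarith
  · intro f g hfg hf ih
    refine ih.congr fun ε => ?_
    apply integral_congr_ae
    filter_upwards [hfg] with x hx
    rw [hx]

lemma eta_main {g} (hg : Nice g) {C : ℝ}
    (hC : Tendsto (fun ε : ℝ => ∫ x in (0:ℝ)..1, g (hpt x ε)) (𝓝[>] 0) (𝓝 C))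
    (η : Measure ℝ) [IsProbabilityMeasure η]
    (hη_supp : η (Set.Icc (0 : ℝ) 1)ᶜ = 0) (hη_ac : η ≪ volume) :
    Tendsto (fun ε : ℝ => ∫ x, g (hpt x ε) ∂η) (𝓝[>] 0) (𝓝 C) := by
  obtain ⟨M0, hM0, hb0⟩ := hg.bdd
  obtain ⟨M, hM, hb⟩ : ∃ M : ℝ, 0 < M ∧ ∀ z, |g z - C| ≤ M :=
    ⟨M0 + |C|, by positivity, fun z => (abs_sub _ _).trans (by linarith [hb0 z])⟩
  have hac : η ≪ volume.restrict (Set.Ioc (0 : ℝ) 1) := by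
    refine Measure.AbsolutelyContinuous.mk fun s hs h0 => ?_
    rw [Measure.restrict_apply hs] at h0
    have h1 := hη_ac h0
    have h2 : η {(0 : ℝ)} = 0 := hη_ac (by simp)
    refine measure_mono_null (t := (s ∩ Set.Ioc 0 1) ∪ ((Set.Icc 0 1)ᶜ ∪ {0})) ?_
      (measure_union_null h1 (measure_union_null hη_supp h2))
    intro x hx
    by_cases hx0 : x = 0
    · right; right; exact hx0
    by_cases hx1 : x ∈ Set.Icc (0 : ℝ) 1
    · left; exact ⟨hx, lt_of_le_of_ne hx1.1 (Ne.symm hx0), hx1.2⟩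
    · right; left; exact hx1
  have hmain := L1_main (G := fun ε x => g (hpt x ε) - C) hM
    (fun ε hε => (cont_row hg hε).sub continuous_const) (fun ε x => hb _)
    (fun t h0 h1 => Phi_main hg hC h0 h1) _
    (Measure.integrable_toReal_rnDeriv (μ := η) (ν := volume.restrict (Set.Ioc (0 : ℝ) 1)))
  have h2 := hmain.add_const C
  rw [zero_add] at h2
  refine h2.congr' ?_
  filter_upwards [self_mem_nhdsWithin] with ε hε
  have h3 := integral_rnDeriv_smul (E := ℝ) (f := fun x => g (hpt x ε) - C) hac
  simp only [smul_eq_mul] at h3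
  rw [h3, integral_sub _ (integrable_const _)]
  · simp
  · exact Integrable.of_bound (cont_row hg hε).aestronglyMeasurable M0 (by filter_upwards with x using hb0 _)

theorem horocycles_equidistribute_ac_measure
    (η : Measure ℝ) [IsProbabilityMeasure η]
    (hη_supp : η (Set.Icc (0 : ℝ) 1)ᶜ = 0)
    (hη_ac : η ≪ volume)
    (f : ℂ → ℝ)
    (hcont : ContinuousOn f {z : ℂ | 0 < z.im})
    (hinv : ∀ a b c d : ℤ, a * d - b * c = 1 → ∀ z : ℂ, 0 < z.im →
      f (((a : ℂ) * z + b) / ((c : ℂ) * z + d)) = f z)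
    (hsupp : ∃ Y : ℝ, 0 < Y ∧ ∀ z : ℂ, 0 < z.im →
      (∃ a b c d : ℤ, a * d - b * c = 1 ∧
        Y < ((((a : ℂ) * z + b) / ((c : ℂ) * z + d)).im)) → f z = 0) :
    Filter.Tendsto (fun ε : ℝ => ∫ x, f ((x : ℂ) + ε * Complex.I) ∂η)
      (nhdsWithin 0 (Set.Ioi 0))
      (nhds ((3 / Real.pi) * ∫ p in fundDom, f ((p.1 : ℂ) + p.2 * Complex.I) / p.2 ^ 2)) := by
  have hg : Nice (fun z : UpperHalfPlane => f z) := by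
    refine ⟨?_, ?_, ?_⟩
    · exact hcont.comp_continuous UpperHalfPlane.continuous_coe fun z => z.im_pos
    · intro γ z
      have hdet := γ.det_coe
      rw [Matrix.det_fin_two] at hdet
      rw [← hinv (γ 0 0) (γ 0 1) (γ 1 0) (γ 1 1) hdet z z.im_pos,
        UpperHalfPlane.coe_specialLinearGroup_apply]
      simp
    · obtain ⟨Y, hY, hs⟩ := hsupp
      refine ⟨Y, hY, fun z hz => hs z z.im_pos ⟨1, 0, 0, 1, by norm_num, ?_⟩⟩
      simpa using hz
  have hfe : ∀ x y : ℝ, 0 < y → f (hpt x y) = f ((x : ℂ) + y * Complex.I) := by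
    intro x y hy
    rw [coe_hpt hy]
    congr 1
    apply Complex.ext <;> simp
  have h1 := eta_main hg (partI hg) η hη_supp hη_ac
  have e1 : ∫ p in {p : ℝ × ℝ | |p.1| < 1 / 2 ∧ 1 < p.1 ^ 2 + p.2 ^ 2 ∧ 0 < p.2},
      f (hpt p.1 p.2) / p.2 ^ 2 = ∫ p in fundDom, f ((p.1 : ℂ) + p.2 * Complex.I) / p.2 ^ 2 := by
    apply setIntegral_congr_fun
    · have hpos : MeasurableSet {p : ℝ × ℝ | 0 < p.2} := measurableSet_lt measurable_const measurable_snd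
      exact (measurableSet_lt (f := fun p : ℝ × ℝ => |p.1|) (by fun_prop) measurable_const).inter
        ((measurableSet_lt (g := fun p : ℝ × ℝ => p.1 ^ 2 + p.2 ^ 2)
          measurable_const (by fun_prop)).inter hpos)
    · intro p hp
      simp only
      rw [hfe _ _ hp.2.2]
  rw [e1] at h1
  refine h1.congr' ?_
  filter_upwards [self_mem_nhdsWithin] with ε hε
  congr 1; ext x
  exact hfe x ε hε
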